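/- arXiv:math/0507505 — 4 statements merged into one kernel-verified Lean document; each statement's English description precedes it below -/
import Mathlib

section
/- For integers m ≥ 2 and r ≥ 2, the affine plane curve C = {(x, y) ∈ ℂ² : μ x^m − y^r = 0}, for any μ ∈ ℂ*, admits no nontrivial algebraic action of the additive group (ℂ, +). Equivalently, every locally nilpotent derivation of the ring ℂ[x, y]/(μ x^m − y^r) is zero. -/
open MvPolynomial

set_option synthInstance.maxHeartbeats 1000000
set_option maxHeartbeats 1000000

/-- Taylor series along `D` at the point `p`. -/
noncomputable def tay {B : Type*} [CommRing B] [Algebra ℂ B] (D : Derivation ℂ B B)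
    (p : B →ₐ[ℂ] ℂ) (b : B) : PowerSeries ℂ :=
  PowerSeries.mk fun n => p ((⇑D)^[n] b) / (n.factorial : ℂ)

section tay
variable {B : Type*} [CommRing B] [Algebra ℂ B] (D : Derivation ℂ B B) (p : B →ₐ[ℂ] ℂ)

lemma iter_add (n : ℕ) (a b : B) : (⇑D)^[n] (a + b) = (⇑D)^[n] a + (⇑D)^[n] b := by
  induction n generalizing a b with
  | zero => rfl
  | succ n ih => simp [Function.iterate_succ_apply, ih]

lemma iter_zero (n : ℕ) : (⇑D)^[n] (0 : B) = 0 := by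
  induction n with
  | zero => rfl
  | succ n ih => simp [Function.iterate_succ_apply, ih]

lemma tay_add (a b : B) : tay D p (a + b) = tay D p a + tay D p b := by
  ext n
  simp [tay, iter_add, add_div]

lemma tay_deriv (b : B) (n : ℕ) :
    PowerSeries.coeff n (tay D p (D b)) = PowerSeries.coeff (n + 1) (tay D p b) * (n + 1) := by
  have h1 : (n.factorial : ℂ) ≠ 0 := by exact_mod_cast n.factorial_ne_zero
  have h2 : (n + 1 : ℂ) ≠ 0 := by exact_mod_cast n.succ_ne_zero
  simp only [tay, PowerSeries.coeff_mk, Function.iterate_succ_apply, Nat.factorial_succ]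
  push_cast
  field_simp

lemma tay_deriv' (b : B) :
    tay D p (D b) = PowerSeries.derivative ℂ (tay D p b) := by
  ext n
  rw [tay_deriv, PowerSeries.coeff_derivative]

lemma tay_mul (a b : B) : tay D p (a * b) = tay D p a * tay D p b := by
  ext n
  induction n generalizing a b with
  | zero => simp [tay]
  | succ n ih =>
    have h2 : (n + 1 : ℂ) ≠ 0 := by exact_mod_cast n.succ_ne_zero
    apply mul_right_cancel₀ h2
    rw [← tay_deriv, ← PowerSeries.coeff_derivative, Derivation.leibniz, Derivation.leibniz,
      tay_add, map_add, map_add, smul_eq_mul, smul_eq_mul, ih, ih, tay_deriv', tay_deriv',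
      smul_eq_mul, smul_eq_mul]

lemma tay_algebraMap (c : ℂ) : tay D p (algebraMap ℂ B c) = algebraMap ℂ _ c := by
  ext n
  cases n with
  | zero => simp [tay]
  | succ n => simp [tay, Function.iterate_succ_apply, iter_zero, PowerSeries.algebraMap_apply,
      PowerSeries.coeff_C]

/-- The Taylor series as an algebra homomorphism. -/
noncomputable def tayHom : B →ₐ[ℂ] PowerSeries ℂ where
  toFun := tay D p
  map_one' := by simpa using tay_algebraMap D p 1
  map_mul' := tay_mul D p
  map_zero' := by simpa using tay_algebraMap D p 0
  map_add' := tay_add D p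
  commutes' := tay_algebraMap D p

lemma tay_poly (b : B) (h : ∃ n : ℕ, (⇑D)^[n] b = 0) :
    ∃ P : Polynomial ℂ, (P : PowerSeries ℂ) = tay D p b := by
  obtain ⟨n, hn⟩ := h
  refine ⟨PowerSeries.trunc n (tay D p b), ?_⟩
  ext k
  rw [Polynomial.coeff_coe, PowerSeries.coeff_trunc]
  split_ifs with hk
  · rfl
  · obtain ⟨j, rfl⟩ := Nat.exists_eq_add_of_le (not_lt.mp hk)
    simp [tay, add_comm n j, Function.iterate_add_apply, hn, iter_zero]

end tay

lemma dvd_aeval (d P Q : Polynomial ℂ) (hP : d ∣ P) (hQ : d ∣ Q)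
    (F : MvPolynomial (Fin 2) ℂ) (hF : aeval (![0, 0] : Fin 2 → ℂ) F = 0) :
    d ∣ aeval ![P, Q] F := by
  rw [← Ideal.mem_span_singleton, ← Ideal.Quotient.eq_zero_iff_mem]
  have h : ((Ideal.Quotient.mkₐ ℂ (Ideal.span {d})).comp (aeval ![P, Q])) =
      (Algebra.ofId ℂ _).comp (aeval (![0, 0] : Fin 2 → ℂ)) := by
    ext i
    fin_cases i
    · simpa [Ideal.Quotient.eq_zero_iff_mem, Ideal.mem_span_singleton] using hP
    · simpa [Ideal.Quotient.eq_zero_iff_mem, Ideal.mem_span_singleton] using hQ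
  have := DFunLike.congr_fun h F
  rw [AlgHom.comp_apply, AlgHom.comp_apply, hF, map_zero] at this
  exact this

lemma dvd_step (P : Polynomial ℂ) (s : ℂ) (k : ℕ) (h0 : P.IsRoot s)
    (h : (Polynomial.X - Polynomial.C s) ^ k ∣ Polynomial.derivative P) :
    (Polynomial.X - Polynomial.C s) ^ (k + 1) ∣ P := by
  by_cases hP : P = 0
  · simp [hP]
  have hd : Polynomial.derivative P ≠ 0 := by
    intro hd
    have := Polynomial.natDegree_eq_zero_of_derivative_eq_zero hd
    rw [Polynomial.eq_C_of_natDegree_eq_zero this] at h0 hP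
    simp at h0
    simp [h0] at hP
  have h1 := Polynomial.derivative_rootMultiplicity_of_root h0
  have h2 := (Polynomial.le_rootMultiplicity_iff hd).mpr h
  have h3 := (Polynomial.rootMultiplicity_pos hP).mpr h0
  exact (Polynomial.le_rootMultiplicity_iff hP).mp (by omega)

lemma poly_const (m r : ℕ) (hm : 2 ≤ m) (hr : 2 ≤ r) (μ : ℂ) (P Q : Polynomial ℂ)
    (hPQ : Polynomial.C μ * P ^ m = Q ^ r) (F G : MvPolynomial (Fin 2) ℂ)
    (hF : aeval (![0, 0] : Fin 2 → ℂ) F = 0) (hG : aeval (![0, 0] : Fin 2 → ℂ) G = 0)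
    (hP : Polynomial.derivative P = aeval ![P, Q] F)
    (hQ : Polynomial.derivative Q = aeval ![P, Q] G) :
    Polynomial.derivative P = 0 ∧ Polynomial.derivative Q = 0 := by
  have hPc : P.natDegree = 0 := by
    by_contra hne
    have hdeg : P.degree ≠ 0 := fun h => hne (Polynomial.natDegree_eq_of_degree_eq_some h)
    obtain ⟨s, hs⟩ := IsAlgClosed.exists_root P hdeg
    have hsQ : Q.IsRoot s := by
      have := congrArg (Polynomial.eval s) hPQ
      simp only [Polynomial.eval_mul, Polynomial.eval_pow, hs.eq_zero] at this
      rw [zero_pow (by omega), mul_zero] at this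
      exact pow_eq_zero_iff (by omega) |>.mp this.symm
    have key : ∀ k : ℕ, (Polynomial.X - Polynomial.C s) ^ k ∣ P ∧
        (Polynomial.X - Polynomial.C s) ^ k ∣ Q := by
      intro k
      induction k with
      | zero => simp
      | succ k ih =>
        refine ⟨dvd_step P s k hs ?_, dvd_step Q s k hsQ ?_⟩
        · rw [hP]; exact dvd_aeval _ _ _ ih.1 ih.2 _ hF
        · rw [hQ]; exact dvd_aeval _ _ _ ih.1 ih.2 _ hG
    have hP0 : P ≠ 0 := by rintro rfl; simp at hne
    have := (Polynomial.le_rootMultiplicity_iff hP0).mpr (key (P.rootMultiplicity s + 1)).1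
    omega
  rw [Polynomial.eq_C_of_natDegree_eq_zero hPc] at hPQ ⊢
  have hQc : Q.natDegree = 0 := by
    have := congrArg Polynomial.natDegree hPQ
    rw [← Polynomial.C_pow, ← Polynomial.C_mul, Polynomial.natDegree_C,
      Polynomial.natDegree_pow] at this
    rcases Nat.mul_eq_zero.mp this.symm with h | h
    · omega
    · exact h
  refine ⟨by simp, ?_⟩
  rw [Polynomial.eq_C_of_natDegree_eq_zero hQc]
  simp

/-- Lifts of the values of `D` vanish at the origin. -/
lemma origin_x (m r : ℕ) (hm : 2 ≤ m) (hr : 2 ≤ r) (μ : ℂ) (hμ : μ ≠ 0)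
    (F G H : MvPolynomial (Fin 2) ℂ)
    (h : C (m * μ) * X 0 ^ (m - 1) * F - C (r : ℂ) * X 1 ^ (r - 1) * G =
      (C μ * X 0 ^ m - X 1 ^ r) * H) : aeval (![0, 0] : Fin 2 → ℂ) F = 0 := by
  have h1 := congrArg (aeval (![Polynomial.X, 0] : Fin 2 → Polynomial ℂ)) h
  obtain ⟨k, rfl⟩ := Nat.exists_eq_add_of_le hm
  obtain ⟨l, rfl⟩ := Nat.exists_eq_add_of_le hr
  have e1 : 2 + k - 1 = k + 1 := by omega
  have e2 : 2 + l - 1 = l + 1 := by omega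
  have e3 : 2 + k = k + 2 := by omega
  have e4 : 2 + l = l + 2 := by omega
  rw [e1, e2, e3, e4] at h1
  simp only [map_sub, map_mul, map_pow, aeval_X, algHom_C, Matrix.cons_val_zero,
    Matrix.cons_val_one, ne_eq, Nat.add_eq_zero_iff, one_ne_zero, and_false, not_false_eq_true,
    OfNat.ofNat_ne_zero,
    zero_pow, mul_zero, zero_mul, sub_zero, Polynomial.algebraMap_apply, Algebra.algebraMap_self,
    RingHom.id_apply] at h1
  have h2 := congrArg (fun q => Polynomial.coeff q (k + 1)) h1
  have e : ∀ a b : Polynomial ℂ, a * Polynomial.X ^ (k + 1) * b = a * b * Polynomial.X ^ (k + 1) :=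
    fun a b => by ring
  have e' : ∀ a b : Polynomial ℂ, a * Polynomial.X ^ (k + 2) * b =
    a * b * Polynomial.X * Polynomial.X ^ (k + 1) := fun a b => by ring
  rw [← Polynomial.C_mul] at h1
  have hcomp : aeval (![0, 0] : Fin 2 → ℂ) F =
      Polynomial.aeval (0 : ℂ) (aeval (![Polynomial.X, 0] : Fin 2 → Polynomial ℂ) F) := by
    have : aeval (![0, 0] : Fin 2 → ℂ) = (Polynomial.aeval (0 : ℂ)).comp
        (aeval (![Polynomial.X, 0] : Fin 2 → Polynomial ℂ)) := by
      ext i; fin_cases i <;> simp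
    rw [this]; rfl
  rw [hcomp]
  generalize aeval (![Polynomial.X, 0] : Fin 2 → Polynomial ℂ) F = f at *
  generalize aeval (![Polynomial.X, 0] : Fin 2 → Polynomial ℂ) H = g at *
  rw [e, e'] at h1
  have h3 := mul_right_cancel₀ (pow_ne_zero _ Polynomial.X_ne_zero) h1
  have h4 := congrArg (Polynomial.eval 0) h3
  have h5 : ((2 + k : ℕ) : ℂ) ≠ 0 := by exact_mod_cast (by omega)
  simp only [Polynomial.eval_mul, Polynomial.eval_C, Polynomial.eval_X, mul_zero] at h4
  replace h4 := (mul_eq_zero.mp h4).resolve_left (mul_ne_zero (by simpa [add_comm] using h5) hμ)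
  simpa [Polynomial.aeval_def, Polynomial.eval₂_eq_eval_map] using h4

/-- Functions vanishing at all points of the curve lie in the ideal. -/
lemma points (m r : ℕ) (hr : 2 ≤ r) (μ : ℂ) (hμ : μ ≠ 0)
    (F : MvPolynomial (Fin 2) ℂ)
    (h : ∀ a b : ℂ, μ * a ^ m = b ^ r → aeval ![a, b] F = 0) :
    F ∈ Ideal.span ({C μ * X 0 ^ m - X 1 ^ r} : Set (MvPolynomial (Fin 2) ℂ)) := by
  let q : Polynomial (Polynomial ℂ) :=
    Polynomial.X ^ r - Polynomial.C (Polynomial.C μ * Polynomial.X ^ m)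
  have hq : q.Monic := Polynomial.monic_X_pow_sub_C _ (by omega)
  have hqd : q.natDegree = r := Polynomial.natDegree_X_pow_sub_C
  let T : MvPolynomial (Fin 2) ℂ →ₐ[ℂ] Polynomial (Polynomial ℂ) :=
    aeval ![Polynomial.C Polynomial.X, Polynomial.X]
  let S : Polynomial (Polynomial ℂ) →+* MvPolynomial (Fin 2) ℂ :=
    Polynomial.eval₂RingHom (Polynomial.aeval (X 0 : MvPolynomial (Fin 2) ℂ)).toRingHom (X 1)
  have hST : ∀ f, S (T f) = f := by
    intro f
    have : S.comp T.toRingHom = RingHom.id _ := by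
      apply MvPolynomial.ringHom_ext
      · intro c
        simp [S, T, MvPolynomial.algebraMap_eq, Polynomial.algebraMap_apply]
      · intro i; fin_cases i <;> simp [S, T]
    exact DFunLike.congr_fun this f
  have hev : ∀ a b : ℂ, ∀ f, Polynomial.eval b ((T f).map (Polynomial.evalRingHom a)) =
      aeval ![a, b] f := by
    intro a b f
    have : ((Polynomial.evalRingHom b).comp (Polynomial.mapRingHom (Polynomial.evalRingHom a))).comp
        T.toRingHom = (aeval ![a, b] : MvPolynomial (Fin 2) ℂ →ₐ[ℂ] ℂ).toRingHom := by
      apply MvPolynomial.ringHom_ext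
      · intro c
        simp [T, Polynomial.algebraMap_apply]
      · intro i; fin_cases i <;> simp [T]
    exact DFunLike.congr_fun this f
  have hmod := Polynomial.modByMonic_add_div (T F) q
  set g := T F %ₘ q with hg
  have hgdeg : g.natDegree < r := by
    rw [← hqd]
    exact Polynomial.natDegree_modByMonic_lt _ hq (by
      intro h1; rw [h1] at hqd; simp at hqd; omega)
  have hg0 : g = 0 := by
    have hz : ∀ a : ℂ, a ≠ 0 → g.map (Polynomial.evalRingHom a) = 0 := by
      intro a ha
      obtain ⟨b, hb⟩ := IsAlgClosed.exists_pow_nat_eq (μ * a ^ m) (show 0 < r by omega)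
      have hb0 : b ≠ 0 := by
        rintro rfl
        rw [zero_pow (by omega)] at hb
        exact mul_ne_zero hμ (pow_ne_zero _ ha) hb.symm
      have hζ := Complex.isPrimitiveRoot_exp r (by omega)
      set ζ := Complex.exp (2 * Real.pi * Complex.I / r)
      refine Polynomial.eq_zero_of_natDegree_lt_card_of_eval_eq_zero
        (ι := Fin r) _ (f := fun i => ζ ^ (i : ℕ) * b) ?_ ?_ ?_
      · intro i j hij
        exact Fin.ext (hζ.pow_inj i.2 j.2 (mul_right_cancel₀ hb0 hij))
      · intro i
        have hc : μ * a ^ m = (ζ ^ (i : ℕ) * b) ^ r := by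
          rw [mul_pow, ← pow_mul, mul_comm (i : ℕ) r, pow_mul, hζ.pow_eq_one, one_pow, one_mul, hb]
        have h1 := h _ _ hc
        rw [← hev, ← hmod] at h1
        simpa [q, ← hc] using h1
      · rw [Fintype.card_fin]
        exact lt_of_le_of_lt Polynomial.natDegree_map_le hgdeg
    ext1 i
    rw [Polynomial.coeff_zero]
    apply Polynomial.eq_zero_of_infinite_isRoot
    refine Set.Infinite.mono (s := {0}ᶜ) ?_ (Set.finite_singleton (0 : ℂ)).infinite_compl
    intro a ha
    have := congrArg (fun f => Polynomial.coeff f i) (hz a ha)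
    simpa using this
  rw [hg0, zero_add] at hmod
  have h1 := hST F
  rw [← hmod, map_mul] at h1
  have hSq : S q = - (C μ * X 0 ^ m - X 1 ^ r) := by
    simp only [S, q, map_sub, map_pow, Polynomial.coe_eval₂RingHom, Polynomial.eval₂_sub,
      Polynomial.eval₂_X_pow, Polynomial.eval₂_C]
    simp [MvPolynomial.algebraMap_eq]
  rw [Ideal.mem_span_singleton, ← h1, hSq, neg_mul]
  exact (Dvd.intro _ rfl).neg_right

lemma core (m r : ℕ) (hm : 2 ≤ m) (hr : 2 ≤ r) (μ : ℂ) (hμ : μ ≠ 0)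
    (f : MvPolynomial (Fin 2) ℂ) (hf : f = C μ * X 0 ^ m - X 1 ^ r)
    (I : Ideal (MvPolynomial (Fin 2) ℂ)) (hI : I = Ideal.span {f})
    (D : Derivation ℂ (MvPolynomial (Fin 2) ℂ ⧸ I) (MvPolynomial (Fin 2) ℂ ⧸ I))
    (hln : ∀ b, ∃ n : ℕ, (⇑D)^[n] b = 0) : D = 0 := by
  have hfI : f ∈ I := by rw [hI]; exact Ideal.subset_span rfl
  have hmem : ∀ g, g ∈ I → f ∣ g := fun g hg => by
    rw [hI] at hg; exact Ideal.mem_span_singleton.mp hg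
  let π : MvPolynomial (Fin 2) ℂ →ₐ[ℂ] (MvPolynomial (Fin 2) ℂ ⧸ I) := Ideal.Quotient.mkₐ ℂ I
  have hπ : Function.Surjective π := Ideal.Quotient.mkₐ_surjective ℂ I
  have hker : ∀ g, π g = 0 ↔ g ∈ I := fun g => Ideal.Quotient.eq_zero_iff_mem
  obtain ⟨F, hF⟩ := hπ (D (π (X 0)))
  obtain ⟨G, hG⟩ := hπ (D (π (X 1)))
  have hrel : algebraMap ℂ _ μ * π (X 0) ^ m = π (X 1) ^ r := by
    have : π f = 0 := (hker f).mpr hfI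
    rw [hf, map_sub, map_mul, map_pow, map_pow, sub_eq_zero] at this
    rw [← this, ← MvPolynomial.algebraMap_eq, AlgHom.commutes]
  have hD : π (C (m * μ) * X 0 ^ (m - 1) * F - C (r : ℂ) * X 1 ^ (r - 1) * G) = 0 := by
    have h1 := congrArg D hrel
    rw [Derivation.leibniz, Derivation.map_algebraMap, smul_zero, add_zero,
      Derivation.leibniz_pow, Derivation.leibniz_pow] at h1
    simp only [smul_eq_mul, nsmul_eq_mul, ← hF, ← hG] at h1
    simp only [← MvPolynomial.algebraMap_eq, map_sub, map_mul, map_pow, AlgHom.commutes,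
      map_natCast]
    linear_combination h1
  obtain ⟨H, hH⟩ := hmem _ ((hker _).mp hD)
  have hF0 := origin_x m r hm hr μ hμ F G H (hf ▸ hH)
  have hG0 : aeval (![0, 0] : Fin 2 → ℂ) G = 0 := by
    let σ : MvPolynomial (Fin 2) ℂ →ₐ[ℂ] MvPolynomial (Fin 2) ℂ := aeval ![X 1, X 0]
    have h1 := congrArg σ hH
    have h2 := origin_x r m hr hm μ⁻¹ (inv_ne_zero hμ) (σ G) (σ F) (σ H) (by
      simp only [hf, map_sub, map_mul, map_pow, σ, aeval_X, algHom_C, Matrix.cons_val_zero,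
        Matrix.cons_val_one, MvPolynomial.algebraMap_eq] at h1 ⊢
      have hc : (C μ⁻¹ * C μ : MvPolynomial (Fin 2) ℂ) = 1 := by
        rw [← C_mul, inv_mul_cancel₀ hμ, C_1]
      linear_combination (-C μ⁻¹) * h1 + (C (m : ℂ) * X 1 ^ (m - 1) * aeval ![X 1, X 0] F
        - X 1 ^ m * aeval ![X 1, X 0] H) * hc)
    have : (aeval (![0, 0] : Fin 2 → ℂ)).comp σ = aeval (![0, 0] : Fin 2 → ℂ) := by
      ext i; fin_cases i <;> simp [σ]
    rw [← this]; exact h2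
  have main : ∀ a b : ℂ, μ * a ^ m = b ^ r → aeval ![a, b] F = 0 ∧ aeval ![a, b] G = 0 := by
    intro a b hab
    let p : (MvPolynomial (Fin 2) ℂ ⧸ I) →ₐ[ℂ] ℂ := Ideal.Quotient.liftₐ I (aeval ![a, b]) (by
      intro g hg
      obtain ⟨k, rfl⟩ := hmem _ hg
      simp [hf, hab])
    have hp : ∀ g, p (π g) = aeval ![a, b] g := fun g => rfl
    obtain ⟨P, hP⟩ := tay_poly D p (π (X 0)) (hln _)
    obtain ⟨Q, hQ⟩ := tay_poly D p (π (X 1)) (hln _)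
    let ι : Polynomial ℂ →ₐ[ℂ] PowerSeries ℂ := Polynomial.coeToPowerSeries.algHom ℂ
    have hι : ∀ A, ι A = (A : PowerSeries ℂ) := fun A => by
      simp [ι, Polynomial.coeToPowerSeries.algHom_apply]
    have hcomp : ∀ g, ι (aeval ![P, Q] g) = tay D p (π g) := by
      intro g
      have : ι.comp (aeval ![P, Q]) = (tayHom D p).comp π := by
        apply MvPolynomial.algHom_ext
        intro i
        fin_cases i
        · simpa [hι] using! hP
        · simpa [hι] using! hQ
      exact DFunLike.congr_fun this g
    have hinj : Function.Injective ι := fun A B hAB => by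
      rw [hι, hι] at hAB; exact Polynomial.coe_injective ℂ hAB
    have hPQ : Polynomial.C μ * P ^ m = Q ^ r := by
      have h0 : aeval ![P, Q] f = 0 := by
        apply hinj
        rw [hcomp, (hker f).mpr hfI, map_zero]
        exact (tayHom D p).map_zero
      simpa [hf, sub_eq_zero, Polynomial.algebraMap_apply] using h0
    have hdP : Polynomial.derivative P = aeval ![P, Q] F := by
      apply hinj
      rw [hcomp, hF, tay_deriv', ← hP, hι, PowerSeries.derivative_coe]
    have hdQ : Polynomial.derivative Q = aeval ![P, Q] G := by
      apply hinj
      rw [hcomp, hG, tay_deriv', ← hQ, hι, PowerSeries.derivative_coe]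
    obtain ⟨c1, c2⟩ := poly_const m r hm hr μ P Q hPQ F G hF0 hG0 hdP hdQ
    have hc : ∀ g : MvPolynomial (Fin 2) ℂ, aeval ![P, Q] g = 0 → aeval ![a, b] g = 0 := by
      intro g hg
      have h1 := hcomp g
      rw [hg, map_zero] at h1
      have h2 := congrArg (PowerSeries.coeff 0) h1
      simp only [tay, PowerSeries.coeff_mk, map_zero] at h2
      simpa [hp] using h2.symm
    exact ⟨hc F (hdP ▸ c1), hc G (hdQ ▸ c2)⟩
  have hx : D (π (X 0)) = 0 := by
    rw [← hF, hker, hI, hf]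
    exact points m r hr μ hμ F fun a b hab => (main a b hab).1
  have hy : D (π (X 1)) = 0 := by
    rw [← hG, hker, hI, hf]
    exact points m r hr μ hμ G fun a b hab => (main a b hab).2
  ext b
  obtain ⟨g, rfl⟩ := hπ b
  rw [Derivation.zero_apply]
  induction g using MvPolynomial.induction_on with
  | C c => rw [← MvPolynomial.algebraMap_eq, AlgHom.commutes, Derivation.map_algebraMap]
  | add u v hu hv => rw [map_add, map_add, hu, hv, add_zero]
  | mul_X u i hu =>
    rw [map_mul, Derivation.leibniz, hu, smul_zero, add_zero]
    fin_cases i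
    · exact (congrArg _ hx).trans (smul_zero _)
    · exact (congrArg _ hy).trans (smul_zero _)

/-- For `m, r ≥ 2` and `μ ∈ ℂ*`, every locally nilpotent
`ℂ`-derivation of `ℂ[x,y]/(μ x^m − y^r)` is zero (the curve admits no nontrivial
`ℂ₊`-action). -/
theorem stmt9 (m r : ℕ) (hm : 2 ≤ m) (hr : 2 ≤ r) (μ : ℂ) (hμ : μ ≠ 0)
    (D : Derivation ℂ
      (MvPolynomial (Fin 2) ℂ ⧸
        Ideal.span ({MvPolynomial.C μ * MvPolynomial.X 0 ^ m - MvPolynomial.X 1 ^ r} :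
          Set (MvPolynomial (Fin 2) ℂ)))
      (MvPolynomial (Fin 2) ℂ ⧸
        Ideal.span ({MvPolynomial.C μ * MvPolynomial.X 0 ^ m - MvPolynomial.X 1 ^ r} :
          Set (MvPolynomial (Fin 2) ℂ))))
    (hln : ∀ b, ∃ n : ℕ, (⇑D)^[n] b = 0) :
    D = 0 := by
  exact core m r hm hr μ hμ _ rfl _ rfl D hln
end

section
/- Let B = ℂ[x₁,…,xₙ, y, z]/(x₁^{m₁}⋯xₙ^{mₙ} z − Q(x, y)), where Q(x,y) = y^r + Σ_{i<r} a_i(x) y^i is monic in y of degree r ≥ 2 and all mᵢ ≥ 1. Then the formulas ∂(xᵢ) = 0, ∂(y) = x₁^{m₁}⋯xₙ^{mₙ}, ∂(z) = ∂Q/∂y define a nonzero locally nilpotent ℂ-derivation of B. -/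
open MvPolynomial

set_option synthInstance.maxHeartbeats 1000000
set_option maxHeartbeats 1000000

lemma nilp_mono {R : Type*} [CommRing R] [Algebra ℂ R] (D : Derivation ℂ R R) {a : R} {j k : ℕ}
    (hjk : j ≤ k) (h : (⇑D)^[j] a = 0) : (⇑D)^[k] a = 0 := by
  obtain ⟨l, rfl⟩ := Nat.exists_eq_add_of_le hjk
  rw [add_comm, Function.iterate_add_apply, h]
  exact iterate_map_zero D l

lemma nilp_add {R : Type*} [CommRing R] [Algebra ℂ R] (D : Derivation ℂ R R) {a b : R}
    (ha : ∃ k : ℕ, (⇑D)^[k] a = 0) (hb : ∃ k : ℕ, (⇑D)^[k] b = 0) :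
    ∃ k : ℕ, (⇑D)^[k] (a + b) = 0 := by
  obtain ⟨j, hj⟩ := ha
  obtain ⟨k, hk⟩ := hb
  refine ⟨max j k, ?_⟩
  rw [iterate_map_add, nilp_mono D (le_max_left j k) hj, nilp_mono D (le_max_right j k) hk, add_zero]

lemma nilp_mul_aux {R : Type*} [CommRing R] [Algebra ℂ R] (D : Derivation ℂ R R) (N : ℕ) :
    ∀ (a b : R) (j k : ℕ), j + k ≤ N → (⇑D)^[j] a = 0 → (⇑D)^[k] b = 0 →
      ∃ K : ℕ, (⇑D)^[K] (a * b) = 0 := by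
  induction N with
  | zero =>
    intro a b j k h ha _
    obtain rfl : j = 0 := by omega
    exact ⟨0, by simp_all⟩
  | succ N ih =>
    intro a b j k h ha hb
    rcases j with _ | j
    · exact ⟨0, by simp_all⟩
    rcases k with _ | k
    · exact ⟨0, by simp_all⟩
    have h1 := ih a (D b) (j + 1) k (by omega) ha (by simpa using hb)
    have h2 := ih b (D a) (k + 1) j (by omega) hb (by simpa using ha)
    obtain ⟨K, hK⟩ := nilp_add D h1 h2
    refine ⟨K + 1, ?_⟩
    rw [Function.iterate_succ_apply, Derivation.leibniz]
    simpa using hK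

lemma nilp_mul {R : Type*} [CommRing R] [Algebra ℂ R] (D : Derivation ℂ R R) {a b : R}
    (ha : ∃ k : ℕ, (⇑D)^[k] a = 0) (hb : ∃ k : ℕ, (⇑D)^[k] b = 0) :
    ∃ k : ℕ, (⇑D)^[k] (a * b) = 0 := by
  obtain ⟨j, hj⟩ := ha
  obtain ⟨k, hk⟩ := hb
  exact nilp_mul_aux D (j + k) a b j k le_rfl hj hk

/-- A derivation preserving an ideal descends to the quotient. -/
lemma exists_descend {R : Type*} [CommRing R] [Algebra ℂ R] (D : Derivation ℂ R R) (I : Ideal R)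
    (h : ∀ a ∈ I, D a ∈ I) :
    ∃ E : Derivation ℂ (R ⧸ I) (R ⧸ I), ∀ a,
      E (Ideal.Quotient.mk I a) = Ideal.Quotient.mk I (D a) := by
  let f : (R ⧸ I) →ₗ[ℂ] (R ⧸ I) :=
    { toFun := Quotient.lift (fun a => Ideal.Quotient.mk I (D a)) (by
        intro a b hab
        have hab' : a - b ∈ I := (Submodule.quotientRel_def I).1 hab
        apply Ideal.Quotient.eq.2
        rw [← map_sub]
        exact h _ hab')
      map_add' := by
        intro a b
        obtain ⟨a, rfl⟩ := Ideal.Quotient.mk_surjective a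
        obtain ⟨b, rfl⟩ := Ideal.Quotient.mk_surjective b
        change Ideal.Quotient.mk I (D (a + b)) = Ideal.Quotient.mk I (D a) + Ideal.Quotient.mk I (D b)
        rw [map_add, map_add]
      map_smul' := by
        intro c a
        obtain ⟨a, rfl⟩ := Ideal.Quotient.mk_surjective a
        change Ideal.Quotient.mk I (D (c • a)) = c • Ideal.Quotient.mk I (D a)
        rw [D.map_smul]
        rfl }
  have hf : ∀ a, f (Ideal.Quotient.mk I a) = Ideal.Quotient.mk I (D a) := fun a => rfl
  refine ⟨Derivation.mk' f ?_, fun a => hf a⟩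
  intro a b
  obtain ⟨a, rfl⟩ := Ideal.Quotient.mk_surjective a
  obtain ⟨b, rfl⟩ := Ideal.Quotient.mk_surjective b
  rw [← map_mul, hf, hf, hf, Derivation.leibniz]
  simp

/-- On `B = ℂ[x₁,…,xₙ,y,z]/(x^{[m]}z − Q(x,y))` with `Q` monic in
`y` of degree `r ≥ 2` and all `mᵢ ≥ 1`, the formulas `∂xᵢ = 0`, `∂y = x^{[m]}`,
`∂z = ∂Q/∂y` define a nonzero locally nilpotent `ℂ`-derivation. -/
theorem stmt11 (n r : ℕ) (hr : 2 ≤ r) (m : Fin n → ℕ) (hm : ∀ i, 1 ≤ m i)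
    (Q : Polynomial (MvPolynomial (Fin n) ℂ)) (hQ : Q.Monic) (hdeg : Q.natDegree = r)
    (ι : MvPolynomial (Fin n) ℂ →+* MvPolynomial (Fin n ⊕ Fin 2) ℂ)
    (hι : ι = (MvPolynomial.rename (Sum.inl : Fin n → Fin n ⊕ Fin 2)).toRingHom)
    (y z xm : MvPolynomial (Fin n ⊕ Fin 2) ℂ)
    (hy : y = MvPolynomial.X (Sum.inr 0)) (hz : z = MvPolynomial.X (Sum.inr 1))
    (hxm : xm = ∏ i, MvPolynomial.X (Sum.inl i) ^ m i)
    (I : Ideal (MvPolynomial (Fin n ⊕ Fin 2) ℂ))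
    (hI : I = Ideal.span {xm * z - Polynomial.eval₂ ι y Q}) :
    ∃ D : Derivation ℂ
        (MvPolynomial (Fin n ⊕ Fin 2) ℂ ⧸ I) (MvPolynomial (Fin n ⊕ Fin 2) ℂ ⧸ I),
      D ≠ 0 ∧ (∀ b, ∃ k : ℕ, (⇑D)^[k] b = 0) ∧
      (∀ i, D (Ideal.Quotient.mk I (MvPolynomial.X (Sum.inl i))) = 0) ∧
      D (Ideal.Quotient.mk I y) = Ideal.Quotient.mk I xm ∧
      D (Ideal.Quotient.mk I z) =
        Ideal.Quotient.mk I (Polynomial.eval₂ ι y (Polynomial.derivative Q)) := by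
  classical
  let D : Derivation ℂ (MvPolynomial (Fin n ⊕ Fin 2) ℂ) (MvPolynomial (Fin n ⊕ Fin 2) ℂ) :=
    MvPolynomial.mkDerivation ℂ (Sum.elim (fun _ => 0)
      (fun i => if i = 0 then xm else Polynomial.eval₂ ι y (Polynomial.derivative Q)))
  have Dx : ∀ i, D (MvPolynomial.X (Sum.inl i)) = 0 := fun i => by
    simp [D, MvPolynomial.mkDerivation_X]
  have Dy : D y = xm := by simp [D, hy, MvPolynomial.mkDerivation_X]
  have Dz : D z = Polynomial.eval₂ ι y (Polynomial.derivative Q) := by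
    rw [hz]; simp [D, MvPolynomial.mkDerivation_X]
  have Dι : ∀ p, D (ι p) = 0 := by
    intro p
    induction p using MvPolynomial.induction_on with
    | C a => simp [hι, MvPolynomial.derivation_C]
    | add p q hp hq => rw [map_add, map_add, hp, hq, add_zero]
    | mul_X p i hp =>
      rw [map_mul, Derivation.leibniz, hp]
      have : ι (MvPolynomial.X i) = MvPolynomial.X (Sum.inl i) := by simp [hι]
      rw [this, Dx]; simp
  have hxι : xm = ι (∏ i, MvPolynomial.X i ^ m i) := by simp [hι, hxm]
  have Dxm : D xm = 0 := by rw [hxι, Dι]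
  have DQ : ∀ P : Polynomial (MvPolynomial (Fin n) ℂ),
      D (Polynomial.eval₂ ι y P) = Polynomial.eval₂ ι y (Polynomial.derivative P) * xm := by
    intro P
    induction P using Polynomial.induction_on' with
    | add p q hp hq => simp only [Polynomial.eval₂_add, map_add, hp, hq, add_mul]
    | monomial k a =>
      rw [Polynomial.derivative_monomial, Polynomial.eval₂_monomial, Polynomial.eval₂_monomial,
        Derivation.leibniz, Derivation.leibniz_pow, Dι, Dy]
      simp only [smul_eq_mul, nsmul_eq_mul, map_mul, map_natCast]
      ring
  have hDI : ∀ a ∈ I, D a ∈ I := by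
    intro a ha
    rw [hI, Ideal.mem_span_singleton] at ha
    obtain ⟨c, rfl⟩ := ha
    rw [Derivation.leibniz, map_sub, Derivation.leibniz, Dz, Dxm, DQ, hI,
      Ideal.mem_span_singleton]
    refine ⟨D c, ?_⟩
    simp only [smul_eq_mul]
    ring
  have Nι : ∀ p, ∃ k : ℕ, (⇑D)^[k] (ι p) = 0 := fun p => ⟨1, by simpa using Dι p⟩
  have Ny : ∃ k : ℕ, (⇑D)^[k] y = 0 := ⟨2, by simp [Dy, Dxm]⟩
  have NP : ∀ P : Polynomial (MvPolynomial (Fin n) ℂ),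
      ∃ k : ℕ, (⇑D)^[k] (Polynomial.eval₂ ι y P) = 0 := by
    intro P
    induction P using Polynomial.induction_on' with
    | add p q hp hq => rw [Polynomial.eval₂_add]; exact nilp_add D hp hq
    | monomial k a =>
      rw [Polynomial.eval₂_monomial]
      refine nilp_mul D (Nι a) ?_
      induction k with
      | zero => exact ⟨1, by simp⟩
      | succ k ih => rw [pow_succ]; exact nilp_mul D ih Ny
  have Nz : ∃ k : ℕ, (⇑D)^[k] z = 0 := by
    obtain ⟨k, hk⟩ := NP (Polynomial.derivative Q)
    exact ⟨k + 1, by rw [Function.iterate_succ_apply, Dz, hk]⟩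
  have N : ∀ p, ∃ k : ℕ, (⇑D)^[k] p = 0 := by
    intro p
    induction p using MvPolynomial.induction_on with
    | C a => exact ⟨1, by simp [MvPolynomial.derivation_C]⟩
    | add p q hp hq => exact nilp_add D hp hq
    | mul_X p i hp =>
      refine nilp_mul D hp ?_
      rcases i with i | i
      · exact ⟨1, by simpa using Dx i⟩
      · fin_cases i
        · rw [hy] at Ny; exact Ny
        · rw [hz] at Nz; exact Nz
  obtain ⟨E, hE⟩ := exists_descend D I hDI
  refine ⟨E, ?_, ?_, ?_, ?_, ?_⟩
  · intro h0
    have h1 : Ideal.Quotient.mk I xm = 0 := by rw [← Dy, ← hE, h0]; rfl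
    rw [Ideal.Quotient.eq_zero_iff_mem, hI, Ideal.mem_span_singleton] at h1
    obtain ⟨c, hc⟩ := h1
    let w : ℂ := Polynomial.eval₂ (MvPolynomial.eval (fun _ => (1 : ℂ))) 0 Q
    let φ : MvPolynomial (Fin n ⊕ Fin 2) ℂ →+* ℂ :=
      MvPolynomial.eval (Sum.elim (fun _ => 1) (fun i => if i = 0 then 0 else w))
    have φx : φ xm = 1 := by simp [φ, hxm]
    have φy : φ y = 0 := by simp [φ, hy]
    have φz : φ z = w := by simp [φ, hz]
    have φι : φ.comp ι = MvPolynomial.eval (fun _ => (1 : ℂ)) := by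
      apply MvPolynomial.ringHom_ext
      · intro a; simp [φ, hι]
      · intro i; simp [φ, hι]
    have h2 := congrArg φ hc
    rw [map_mul, map_sub, map_mul, Polynomial.hom_eval₂, φx, φy, φz, φι] at h2
    simp [w] at h2
  · intro b
    obtain ⟨b, rfl⟩ := Ideal.Quotient.mk_surjective b
    obtain ⟨k, hk⟩ := N b
    refine ⟨k, ?_⟩
    have : ∀ (k : ℕ) a, (⇑E)^[k] (Ideal.Quotient.mk I a) = Ideal.Quotient.mk I ((⇑D)^[k] a) := by
      intro k
      induction k with
      | zero => intro a; rfl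
      | succ k ih => intro a; rw [Function.iterate_succ_apply, hE, ih, Function.iterate_succ_apply]
    rw [this, hk, map_zero]
  · intro i; rw [hE, Dx, map_zero]
  · rw [hE, Dy]
  · rw [hE, Dz]
end

section
/- Let B̂ = ℂ[x₁,…,xₙ, y, z]/(x₁^{m₁}⋯xₙ^{mₙ} z − y^r) with all mᵢ ≥ 2 and r ≥ 2. Then every nonzero locally nilpotent ℂ-derivation ∂̂ of B̂ satisfies Ker ∂̂ = ℂ[x₁,…,xₙ] (the image of the polynomial subring in x₁,…,xₙ). -/
open MvPolynomial

set_option synthInstance.maxHeartbeats 1000000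
set_option maxHeartbeats 1000000

namespace Dan

abbrev G (n : ℕ) := (Fin n → ℤ) × ℤ
abbrev L (n : ℕ) := AddMonoidAlgebra ℂ (G n)

/-- Exponents of the monomials of the ring. -/
def S {n : ℕ} (r : ℕ) (m : Fin n → ℕ) (u : G n) : Prop :=
  0 ≤ u.2 ∧ ∀ i, 0 ≤ u.1 i + m i * (u.2 / r)

lemma comb {n r : ℕ} {m : Fin n → ℕ} (hr : 2 ≤ r) (hm : ∀ i, 2 ≤ m i) (i : Fin n) (e : G n)
    (h1 : S r m ((Pi.single i 1, 0) + e)) (h2 : S r m ((0, 1) + e)) :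
    0 ≤ r * e.1 i + m i * e.2 := by
  obtain ⟨α, β⟩ := e
  have hb := h1.1
  have h1 := h1.2 i
  have h2 := h2.2 i
  simp only [Prod.mk_add_mk, Pi.add_apply, Pi.single_eq_same, zero_add] at hb h1 h2 ⊢
  have hr' : (2:ℤ) ≤ r := by exact_mod_cast hr
  have hm' : (2:ℤ) ≤ m i := by exact_mod_cast hm i
  generalize (r:ℤ) = R at *
  generalize (m i:ℤ) = M at *
  generalize α i = a at *
  have e1 := Int.emod_add_mul_ediv β R
  have p1 := Int.emod_nonneg β (show R ≠ 0 by omega)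
  have p2 := Int.emod_lt_of_pos β (show 0 < R by omega)
  by_cases hc : β % R + 1 < R
  · have : (1 + β) / R = β / R := by
      rw [Int.ediv_eq_iff_of_pos (by omega)]
      constructor <;> nlinarith
    rw [this] at h2
    generalize β / R = t at *
    generalize β % R = s at *
    subst e1
    nlinarith
  · have hs : β % R = R - 1 := by omega
    rw [hs] at e1
    generalize β / R = t at *
    subst e1
    nlinarith [mul_nonneg (show 0 ≤ R - 2 by omega) (show 0 ≤ M - 2 by omega)]

lemma divis {n r : ℕ} {m : Fin n → ℕ} (hr : 2 ≤ r) (i : Fin n) (u : G n) (M : ℕ)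
    (h : S r m u) (h2 : (r : ℤ) * M ≤ r * u.1 i + m i * u.2) (hM : m i ≤ M) :
    S r m (u - ((M - m i : ℕ) • ((Pi.single i 1, 0) : G n))) := by
  obtain ⟨a, b⟩ := u
  refine ⟨by simpa using h.1, fun j => ?_⟩
  by_cases hj : j = i
  · subst hj
    simp only [Prod.fst_sub, Prod.snd_sub, Prod.smul_fst, Prod.smul_snd, Pi.sub_apply,
      Pi.smul_apply, Pi.single_eq_same, smul_zero, sub_zero]
    simp only [nsmul_eq_mul, mul_one]
    rw [Nat.cast_sub hM]
    simp only at h2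
    have hr' : (2:ℤ) ≤ r := by exact_mod_cast hr
    have hm' : (0:ℤ) ≤ m j := by positivity
    generalize (r:ℤ) = R at *
    generalize (m j:ℤ) = k at *
    have e1 := Int.emod_add_mul_ediv b R
    have p2 := Int.emod_lt_of_pos b (show 0 < R by omega)
    have p1 := Int.emod_nonneg b (show R ≠ 0 by omega)
    generalize b / R = t at *
    generalize b % R = s at *
    subst e1
    have : R * 0 ≤ R * (a j - (M - k) + k * t) := by nlinarith
    exact le_of_mul_le_mul_left this (by linarith)
  · simpa [hj] using h.2 j

structure Setup (n r : ℕ) (m : Fin n → ℕ) (B : Type) [CommRing B] [Algebra ℂ B] where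
  x : Fin n → B
  y : B
  z : B
  rel : (∏ i, x i ^ m i) * z = y ^ r
  φ : B →ₐ[ℂ] L n
  φx : ∀ i, φ (x i) = .single (Pi.single i 1, 0) 1
  φy : φ y = .single (0, 1) 1
  φz : φ z = .single (fun i => - (m i : ℤ), (r : ℤ)) 1
  span : ∀ b, b ∈ Submodule.span ℂ
    (Set.range fun t : (Fin n → ℕ) × ℕ × ℕ => (∏ i, x i ^ t.1 i) * y ^ t.2.1 * z ^ t.2.2)
  hr : 2 ≤ r
  hm : ∀ i, 2 ≤ m i

variable {n r : ℕ} {m : Fin n → ℕ} {B : Type} [CommRing B] [Algebra ℂ B]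

namespace Setup

variable (s : Setup n r m B)

def mon (t : (Fin n → ℕ) × ℕ × ℕ) : B := (∏ i, s.x i ^ t.1 i) * s.y ^ t.2.1 * s.z ^ t.2.2

lemma ind {P : B → Prop} (b : B) (h0 : ∀ t, P (s.mon t)) (ha : ∀ a b, P a → P b → P (a + b))
    (hs : ∀ (c : ℂ) b, P b → P (c • b)) : P b := by
  refine Submodule.span_induction (p := fun b _ => P b) ?_ ?_ ?_ ?_ (s.span b)
  · rintro _ ⟨t, rfl⟩; exact h0 t
  · simpa using hs 0 _ (h0 0)
  · intro a b _ _; exact ha a b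
  · intro c b _; exact hs c b

def g (r : ℕ) (m : Fin n → ℕ) (t : (Fin n → ℕ) × ℕ × ℕ) : G n :=
  (fun i => t.1 i - m i * t.2.2, t.2.1 + r * t.2.2)

lemma φmon (t) : s.φ (s.mon t) = .single (g r m t) 1 := by
  simp only [mon, map_mul, map_prod, map_pow, s.φx, s.φy, s.φz, AddMonoidAlgebra.single_pow,
    AddMonoidAlgebra.prod_single, AddMonoidAlgebra.single_mul_single]
  congr 1
  · ext j
    · simp only [g, Prod.fst_add, Prod.fst_sum, Prod.smul_fst, Pi.add_apply, Finset.sum_apply,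
        Pi.smul_apply, Pi.single_apply]
      simp
      ring
    · simp [g, Prod.snd_sum]
      ring
  · simp

lemma Sg (hr : 2 ≤ r) (t) : S r m (g r m t) := by
  refine ⟨by simp only [g]; positivity, fun i => ?_⟩
  have : ((t.2.1 + r * t.2.2 : ℤ)) / r = t.2.1 / r + t.2.2 := by
    rw [Int.add_mul_ediv_left _ _ (by omega)]
  simp only [g, this]
  have : (0:ℤ) ≤ (t.2.1 : ℤ) / r := by positivity
  have : (0:ℤ) ≤ m i * ((t.2.1 : ℤ) / r) := by positivity
  have : (0:ℤ) ≤ t.1 i := by positivity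
  nlinarith

/-- Section. -/
def mu (u : G n) : B :=
  s.mon (fun i => (u.1 i + m i * (u.2 / r)).toNat, (u.2 % r).toNat, (u.2 / r).toNat)

lemma φmu (u : G n) (h : S r m u) : s.φ (s.mu u) = .single u 1 := by
  have hr := s.hr
  have p2 := Int.emod_nonneg u.2 (show (r:ℤ) ≠ 0 by omega)
  have p3 : 0 ≤ u.2 / r := Int.ediv_nonneg h.1 (by omega)
  rw [mu, φmon]
  congr 1
  ext j
  · simp only [g]
    rw [Int.toNat_of_nonneg (h.2 j), Int.toNat_of_nonneg p3]
    ring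
  · simp only [g]
    rw [Int.toNat_of_nonneg p2, Int.toNat_of_nonneg p3, Int.emod_add_mul_ediv]

lemma mu_g (t) : s.mu (g r m t) = s.mon t := by
  have hr := s.hr
  obtain ⟨a, b, c⟩ := t
  have e1 : ((b + r * c : ℤ)) / r = b / r + c := by
    rw [Int.add_mul_ediv_left _ _ (by omega)]
  have e2 : ((b + r * c : ℤ)) % r = b % r := by simp
  have e3 : ((b : ℤ) % r).toNat = b % r := by norm_cast
  have e4 : ((b : ℤ) / r + c).toNat = b / r + c := by norm_cast
  have e5 : ∀ i, ((a i : ℤ) - m i * c + m i * (b / r + c)).toNat = a i + m i * (b / r) := by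
    intro i
    have : ((a i : ℤ) - m i * c + m i * (b / r + c)) = ((a i + m i * (b / r) : ℕ) : ℤ) := by
      push_cast; ring
    rw [this, Int.toNat_natCast]
  simp only [mu, g, e1, e2, e3, e4, mon, e5]
  simp only [pow_add, pow_mul, Finset.prod_mul_distrib, Finset.prod_pow]
  conv_rhs => rw [← Nat.mod_add_div b r, pow_add, pow_mul, ← s.rel, mul_pow]
  ring

noncomputable def sig : L n →ₗ[ℂ] B :=
  (Finsupp.linearCombination ℂ s.mu).comp (AddMonoidAlgebra.coeffLinearEquiv ℂ).toLinearMap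

lemma sig_single (u c) : s.sig (.single u c) = c • s.mu u := by
  have : s.sig (.single u c) = Finsupp.linearCombination ℂ s.mu (Finsupp.single u c) := rfl
  rw [this, Finsupp.linearCombination_single]

lemma sig_φ (b : B) : s.sig (s.φ b) = b := by
  refine s.ind (P := fun b => s.sig (s.φ b) = b) b ?_ ?_ ?_
  · intro t; rw [φmon, sig_single, mu_g, one_smul]
  · intro a b ha hb; rw [map_add, map_add, ha, hb]
  · intro c b hb; rw [map_smul, map_smul, hb]

lemma inj : Function.Injective s.φ := Function.LeftInverse.injective s.sig_φ

lemma suppS (b : B) : ∀ u, (s.φ b).coeff u ≠ 0 → S r m u := by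
  refine s.ind (P := fun b => ∀ u, (s.φ b).coeff u ≠ 0 → S r m u) b ?_ ?_ ?_
  · intro t u h
    rw [φmon, AddMonoidAlgebra.coeff_single, Finsupp.single_apply] at h
    by_cases hh : g r m t = u
    · exact hh ▸ Sg s.hr t
    · simp [hh] at h
  · intro a b ha hb u h
    rw [map_add, AddMonoidAlgebra.coeff_add, Finsupp.add_apply] at h
    by_cases h1 : (s.φ a).coeff u = 0
    · exact hb u (by simpa [h1] using h)
    · exact ha u h1
  · intro c b hb u h
    rw [map_smul, AddMonoidAlgebra.coeff_smul_apply] at h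
    exact hb u (right_ne_zero_of_smul h)

lemma φsig (f : L n) (hf : ∀ u, f.coeff u ≠ 0 → S r m u) : s.φ (s.sig f) = f := by
  conv_rhs => rw [← AddMonoidAlgebra.sum_coeff_single f]
  have : s.sig f = f.coeff.sum fun u c => c • s.mu u := rfl
  rw [this, Finsupp.sum, Finsupp.sum, map_sum]
  refine Finset.sum_congr rfl fun u hu => ?_
  rw [map_smul, s.φmu u (hf u (by simpa using hu)), AddMonoidAlgebra.smul_single]
  simp

lemma dom (s : Setup n r m B) : IsDomain B := Function.Injective.isDomain s.φ s.inj


variable (D : Derivation ℂ B B)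

/-- `b` maps to the monomial `u` and the degree-`e` part of `D` has log-derivative `c` at it. -/
def Q (e : G n) (b : B) (u : G n) (c : ℂ) : Prop :=
  s.φ b = .single u 1 ∧ (s.φ (D b)).coeff (u + e) = c

lemma Q.mul {s : Setup n r m B} {D : Derivation ℂ B B} {e : G n} {b b' : B} {u u' c c'}
    (h : s.Q D e b u c) (h' : s.Q D e b' u' c') : s.Q D e (b * b') (u + u') (c + c') := by
  refine ⟨by rw [map_mul, h.1, h'.1, AddMonoidAlgebra.single_mul_single, one_mul], ?_⟩
  rw [Derivation.leibniz, map_add s.φ, smul_eq_mul, smul_eq_mul, map_mul, map_mul, h.1, h'.1,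
    AddMonoidAlgebra.coeff_add, Finsupp.add_apply, AddMonoidAlgebra.coeff_single_mul_apply,
    AddMonoidAlgebra.coeff_single_mul_apply, ← h.2, ← h'.2]
  rw [show -u + (u + u' + e) = u' + e by abel, show -u' + (u + u' + e) = u + e by abel]
  ring

lemma Q.one {s : Setup n r m B} {D : Derivation ℂ B B} {e : G n} : s.Q D e 1 0 0 := by
  refine ⟨by rw [map_one]; rfl, by simp⟩

lemma Q.pow {s : Setup n r m B} {D : Derivation ℂ B B} {e : G n} {b : B} {u c}
    (h : s.Q D e b u c) (k : ℕ) : s.Q D e (b ^ k) (k • u) (k * c) := by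
  induction k with
  | zero => simpa using Q.one
  | succ k ih =>
    rw [pow_succ, succ_nsmul]
    convert ih.mul h using 1
    push_cast; ring

lemma Q.prod {s : Setup n r m B} {D : Derivation ℂ B B} {e : G n} {ι : Type} (t : Finset ι)
    {b : ι → B} {u : ι → G n} {c : ι → ℂ}
    (h : ∀ i, s.Q D e (b i) (u i) (c i)) :
    s.Q D e (∏ i ∈ t, b i) (∑ i ∈ t, u i) (∑ i ∈ t, c i) := by
  classical
  induction t using Finset.induction_on with
  | empty => simpa using Q.one
  | insert a t ha ih =>
    rw [Finset.prod_insert ha, Finset.sum_insert ha, Finset.sum_insert ha]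
    exact (h a).mul ih

lemma Q.uniq {s : Setup n r m B} {D : Derivation ℂ B B} {e : G n} {b : B} {u u' c c'}
    (h : s.Q D e b u c) (h' : s.Q D e b u' c') : c = c' := by
  have := h.1.symm.trans h'.1
  rw [AddMonoidAlgebra.single_left_inj one_ne_zero] at this
  subst this
  exact h.2.symm.trans h'.2

lemma ell_nonneg (u : G n) (h : S r m u) (hr : 2 ≤ r) (i : Fin n) :
    0 ≤ r * u.1 i + m i * u.2 := by
  have h1 := h.2 i
  have hm' : (0:ℤ) ≤ m i := by positivity
  have hr' : (2:ℤ) ≤ r := by exact_mod_cast hr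
  have e1 := Int.mul_ediv_self_le (x := u.2) (k := r) (by omega)
  nlinarith

lemma val_Dx (i : Fin n) (w : G n) (hw : (s.φ (D (s.x i))).coeff w ≠ 0) :
    (r : ℤ) ≤ r * w.1 i + m i * w.2 := by
  by_contra hlt
  push Not at hlt
  have hr := s.hr
  obtain ⟨e, rfl⟩ : ∃ e : G n, w = (Pi.single i 1, 0) + e :=
    ⟨w - (Pi.single i 1, 0), by abel⟩
  have he : r * e.1 i + m i * e.2 < 0 := by
    simp at hlt
    linarith
  have hneg : ∀ b : B, ∀ u : G n, r * u.1 i + m i * u.2 = 0 →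
      (s.φ (D b)).coeff (u + e) = 0 := by
    intro b u hu
    by_contra hne
    have := ell_nonneg _ (s.suppS _ _ hne) hr i
    simp only [Prod.fst_add, Prod.snd_add, Pi.add_apply] at this
    linarith
  have qx : ∀ j, s.Q D e (s.x j) (Pi.single j 1, 0)
      ((s.φ (D (s.x j))).coeff ((Pi.single j 1, 0) + e)) := fun j => ⟨s.φx j, rfl⟩
  have qy : s.Q D e s.y (0, 1) ((s.φ (D s.y)).coeff ((0, 1) + e)) := ⟨s.φy, rfl⟩
  have qz : s.Q D e s.z (fun i => - (m i : ℤ), (r : ℤ)) 0 :=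
    ⟨s.φz, hneg _ _ (by simp only; ring)⟩
  have q1 := (Q.prod Finset.univ fun j => (qx j).pow (m j)).mul qz
  rw [s.rel] at q1
  have hq := q1.uniq (qy.pow r)
  rw [Finset.sum_eq_single i] at hq
  · have hy : (s.φ (D s.y)).coeff ((0, 1) + e) ≠ 0 := by
      intro h0
      rw [h0, add_zero, mul_zero, mul_eq_zero] at hq
      rcases hq with hq | hq
      · have := s.hm i
        have : m i = 0 := by exact_mod_cast hq
        omega
      · exact hw hq
    have := comb hr s.hm i e (s.suppS _ _ hw) (s.suppS _ _ hy)
    linarith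
  · intro j _ hj
    rw [hneg _ _ (by simp [hj.symm]), mul_zero]
  · simp

lemma val_mul (i : Fin n) {f f' : L n} {d d' : ℤ}
    (h : ∀ w, f.coeff w ≠ 0 → d ≤ r * w.1 i + m i * w.2)
    (h' : ∀ w, f'.coeff w ≠ 0 → d' ≤ r * w.1 i + m i * w.2) :
    ∀ w, (f * f').coeff w ≠ 0 → d + d' ≤ r * w.1 i + m i * w.2 := by
  classical
  intro w hw
  have := AddMonoidAlgebra.support_coeff_mul_subset f f' (Finsupp.mem_support_iff.2 hw)
  obtain ⟨a, ha, b, hb, rfl⟩ := Finset.mem_add.1 this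
  have := h a (Finsupp.mem_support_iff.1 ha)
  have := h' b (Finsupp.mem_support_iff.1 hb)
  simp only [Prod.fst_add, Prod.snd_add, Pi.add_apply]
  linarith

lemma val_pow (i : Fin n) {f : L n}
    (h : ∀ w, f.coeff w ≠ 0 → (r : ℤ) ≤ r * w.1 i + m i * w.2) (k : ℕ) :
    ∀ w, (f ^ k).coeff w ≠ 0 → (r : ℤ) * k ≤ r * w.1 i + m i * w.2 := by
  induction k with
  | zero =>
    intro w hw
    rw [pow_zero, AddMonoidAlgebra.one_def, AddMonoidAlgebra.coeff_single,
      Finsupp.single_apply] at hw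
    by_cases h0 : 0 = w
    · subst h0; simp
    · simp [h0] at hw
  | succ k ih =>
    rw [pow_succ]
    have := val_mul i ih h
    push_cast
    rw [mul_add, mul_one]
    exact this

lemma dvd_pow (i : Fin n) (M : ℕ) (hM : m i ≤ M) :
    s.x i ^ (M - m i) ∣ D (s.x i) ^ M := by
  refine ⟨s.sig (.single (-((M - m i : ℕ) • ((Pi.single i 1, 0) : G n))) 1
    * s.φ (D (s.x i) ^ M)), s.inj ?_⟩
  rw [map_mul, φsig, map_pow s.φ (D _), map_pow s.φ (s.x i), s.φx, AddMonoidAlgebra.single_pow, ← mul_assoc,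
    AddMonoidAlgebra.single_mul_single]
  · rw [add_neg_cancel, one_pow, one_mul, ← AddMonoidAlgebra.one_def, one_mul]
  · intro u hu
    rw [AddMonoidAlgebra.coeff_single_mul_apply, one_mul, neg_neg] at hu
    have h1 := s.suppS _ _ hu
    rw [map_pow] at hu
    have := divis s.hr i _ M h1 (val_pow i (s.val_Dx D i) M _ hu) hM
    convert this using 1
    abel

end Setup

lemma iter_add (D : Derivation ℂ B B) (k : ℕ) (a b : B) :
    (⇑D)^[k] (a + b) = (⇑D)^[k] a + (⇑D)^[k] b := by
  induction k generalizing a b with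
  | zero => rfl
  | succ k ih => simp only [Function.iterate_succ_apply, map_add, ih]

lemma iter_zero (D : Derivation ℂ B B) (k : ℕ) : (⇑D)^[k] 0 = 0 := by
  induction k with
  | zero => rfl
  | succ k ih => simp only [Function.iterate_succ_apply, map_zero, ih]

lemma iter_mul (D : Derivation ℂ B B) (N : ℕ) : ∀ (p q : ℕ) (f h : B), p + q = N →
    (⇑D)^[p + 1] f = 0 → (⇑D)^[q + 1] h = 0 →
    (⇑D)^[N] (f * h) = (N.choose p) * ((⇑D)^[p] f * (⇑D)^[q] h) ∧ (⇑D)^[N + 1] (f * h) = 0 := by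
  induction N with
  | zero =>
    intro p q f h hpq hf hh
    obtain ⟨rfl, rfl⟩ : p = 0 ∧ q = 0 := by omega
    simp at hf hh ⊢
    simp [hf, hh]
  | succ N ih =>
    intro p q f h hpq hf hh
    have e : D (f * h) = D f * h + f * D h := by
      rw [Derivation.leibniz, smul_eq_mul, smul_eq_mul]; ring
    rw [Function.iterate_succ_apply _ (N + 1), Function.iterate_succ_apply _ N, e, iter_add,
      iter_add]
    rcases p with _ | p
    · have hf' : D f = 0 := by simpa using hf
      obtain ⟨q, rfl⟩ : ∃ q', q = q' + 1 := ⟨q - 1, by omega⟩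
      have i2 := ih 0 q f (D h) (by omega) hf hh
      rw [hf', zero_mul, iter_zero, iter_zero, i2.1, i2.2]
      simp [Function.iterate_succ_apply]
    · rcases q with _ | q
      · have hh' : D h = 0 := by simpa using hh
        have i2 := ih p 0 (D f) h (by omega) hf hh
        rw [hh', mul_zero, iter_zero, iter_zero, i2.1, i2.2]
        obtain rfl : p = N := by omega
        simp [Function.iterate_succ_apply]
      · have i1 := ih p (q + 1) (D f) h (by omega) hf hh
        have i2 := ih (p + 1) q f (D h) (by omega) hf hh
        rw [i1.1, i2.1, i1.2, i2.2, Nat.choose_succ_succ]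
        simp only [Function.iterate_succ_apply]
        push_cast
        exact ⟨by ring, by ring⟩

/-- exact `D`-degree -/
def Deg (D : Derivation ℂ B B) (f : B) (p : ℕ) : Prop :=
  (⇑D)^[p] f ≠ 0 ∧ (⇑D)^[p + 1] f = 0

lemma Deg.mul [IsDomain B] {D : Derivation ℂ B B} {f h : B} {p q : ℕ} (hf : Deg D f p)
    (hh : Deg D h q) : Deg D (f * h) (p + q) := by
  have := iter_mul D (p + q) p q f h rfl hf.2 hh.2
  refine ⟨?_, this.2⟩
  rw [this.1]
  have : CharZero B := 
    charZero_of_injective_algebraMap (FaithfulSMul.algebraMap_injective ℂ B)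
  refine mul_ne_zero ?_ (mul_ne_zero hf.1 hh.1)
  exact_mod_cast (Nat.choose_pos (Nat.le_add_right p q)).ne'

lemma Deg.pow [IsDomain B] {D : Derivation ℂ B B} {f : B} {p : ℕ} (hf : Deg D f p) (k : ℕ) :
    Deg D (f ^ k) (k * p) := by
  induction k with
  | zero => simp [Deg]
  | succ k ih => rw [pow_succ, add_mul, one_mul]; exact ih.mul hf

lemma Deg.uniq {D : Derivation ℂ B B} {f : B} {p q : ℕ} (h : Deg D f p) (h' : Deg D f q) :
    p = q := by
  have key : ∀ {p q : ℕ}, Deg D f p → Deg D f q → p ≤ q := by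
    intro p q h h'
    by_contra hlt
    apply h.1
    obtain ⟨k, rfl⟩ : ∃ k, p = k + (q + 1) := ⟨p - (q + 1), by omega⟩
    rw [Function.iterate_add_apply, h'.2, iter_zero]
  exact le_antisymm (key h h') (key h' h)

lemma exists_deg {D : Derivation ℂ B B} (hln : ∀ b, ∃ k : ℕ, (⇑D)^[k] b = 0) {f : B}
    (hf : f ≠ 0) : ∃ p, Deg D f p := by
  classical
  have hpos : Nat.find (hln f) ≠ 0 := by
    intro h0
    have := Nat.find_spec (hln f)
    rw [h0] at this
    exact hf this
  obtain ⟨p, hp⟩ := Nat.exists_eq_succ_of_ne_zero hpos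
  refine ⟨p, Nat.find_min (hln f) (by omega), ?_⟩
  have := Nat.find_spec (hln f)
  rwa [hp] at this

namespace Setup

variable (s : Setup n r m B) (D : Derivation ℂ B B)

lemma Dx (hln : ∀ b, ∃ k : ℕ, (⇑D)^[k] b = 0) (i : Fin n) : D (s.x i) = 0 := by
  have := s.dom
  by_contra hne
  obtain ⟨p, hp⟩ := exists_deg hln hne
  have hx : Deg D (s.x i) (p + 1) := hp
  obtain ⟨M, hM⟩ : ∃ M, M = m i * (p + 1) + m i + 1 := ⟨_, rfl⟩
  obtain ⟨c, hc⟩ := s.dvd_pow D i M (by rw [hM]; nlinarith)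
  have h1 := hp.pow M
  have hc0 : c ≠ 0 := by
    rintro rfl
    rw [mul_zero] at hc
    exact hne (eq_zero_of_pow_eq_zero hc)
  obtain ⟨q, hq⟩ := exists_deg hln hc0
  have h2 := (hx.pow (M - m i)).mul hq
  rw [← hc] at h2
  have := h1.uniq h2
  have e : M - m i = m i * (p + 1) + 1 := by omega
  rw [e, hM] at this
  nlinarith

lemma euler (hx : ∀ i, D (s.x i) = 0) (b : B) : ∃ b', s.y * D b = b' * D s.y ∧
    ∀ u, (s.φ b').coeff u = u.2 * (s.φ b).coeff u := by
  have := s.dom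
  have hprod : ∀ a : Fin n → ℕ, D (∏ i, s.x i ^ a i) = 0 := by
    intro a
    refine Finset.prod_induction _ (fun b => D b = 0) ?_ (by simp) ?_
    · intro a b ha hb; simp [ha, hb]
    · intro i _; simp [Derivation.leibniz_pow, hx]
  have hpx : (∏ i, s.x i ^ m i) ≠ 0 := by
    refine Finset.prod_ne_zero_iff.2 fun i _ => pow_ne_zero _ fun h => ?_
    have := s.φx i
    rw [h, map_zero] at this
    exact AddMonoidAlgebra.single_ne_zero.2 one_ne_zero this.symm
  have hyp : ∀ k : ℕ, s.y * D (s.y ^ k) = k * s.y ^ k * D s.y := by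
    intro k
    rcases k with _ | k
    · simp
    · simp [Derivation.leibniz_pow]; ring
  have hyz : s.y * D s.z = r * s.z * D s.y := by
    apply mul_left_cancel₀ hpx
    have h1 : D ((∏ i, s.x i ^ m i) * s.z) = D (s.y ^ r) := by rw [s.rel]
    rw [Derivation.leibniz, hprod, smul_zero, add_zero, smul_eq_mul] at h1
    calc _ = s.y * ((∏ i, s.x i ^ m i) * D s.z) := by ring
      _ = _ := by rw [h1, hyp, ← s.rel]; ring
  have hzp : ∀ k : ℕ, s.y * D (s.z ^ k) = r * k * s.z ^ k * D s.y := by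
    intro k
    rcases k with _ | k
    · simp
    · simp only [Derivation.leibniz_pow, smul_eq_mul, nsmul_eq_mul, Nat.add_sub_cancel]
      linear_combination ((k + 1 : ℕ) : B) * s.z ^ k * hyz
  refine s.ind (P := fun b => ∃ b', s.y * D b = b' * D s.y ∧
    ∀ u, (s.φ b').coeff u = u.2 * (s.φ b).coeff u) b ?_ ?_ ?_
  · intro t
    refine ⟨((t.2.1 + r * t.2.2 : ℕ) : ℂ) • s.mon t, ?_, ?_⟩
    · rw [mon, Derivation.leibniz, Derivation.leibniz, hprod]
      simp only [smul_eq_mul, Nat.cast_smul_eq_nsmul, nsmul_eq_mul]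
      have h1 := hyp t.2.1
      have h2 := hzp t.2.2
      push_cast
      linear_combination (∏ i, s.x i ^ t.1 i) * s.y ^ t.2.1 * h2
        + (∏ i, s.x i ^ t.1 i) * s.z ^ t.2.2 * h1
    · intro u
      rw [map_smul, AddMonoidAlgebra.coeff_smul_apply, φmon, AddMonoidAlgebra.coeff_single,
        Finsupp.single_apply]
      split_ifs with h
      · subst h; simp [g]
      · simp
  · rintro a b ⟨a', ha, ha'⟩ ⟨b', hb, hb'⟩
    refine ⟨a' + b', by rw [map_add, mul_add, ha, hb, add_mul], fun u => ?_⟩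
    rw [map_add, map_add, AddMonoidAlgebra.coeff_add, AddMonoidAlgebra.coeff_add,
      Finsupp.add_apply, Finsupp.add_apply, ha', hb', mul_add]
  · rintro c b ⟨b', hb, hb'⟩
    refine ⟨c • b', by rw [D.map_smul, mul_smul_comm, hb, smul_mul_assoc], fun u => ?_⟩
    rw [map_smul, map_smul, AddMonoidAlgebra.coeff_smul_apply,
      AddMonoidAlgebra.coeff_smul_apply, hb', smul_eq_mul, smul_eq_mul]
    ring

theorem main (hln : ∀ b, ∃ k : ℕ, (⇑D)^[k] b = 0) (hD : D ≠ 0) (b : B) (hb : D b = 0) :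
    b ∈ Algebra.adjoin ℂ (Set.range s.x) := by
  have := s.dom
  have hx := s.Dx D hln
  have hy0 : s.y ≠ 0 := by
    intro h
    have := s.φy
    rw [h, map_zero] at this
    exact AddMonoidAlgebra.single_ne_zero.2 one_ne_zero this.symm
  have hDy : D s.y ≠ 0 := by
    intro h0
    apply hD
    ext b
    obtain ⟨b', h1, -⟩ := s.euler D hx b
    rw [h0, mul_zero] at h1
    exact (mul_eq_zero.1 h1).resolve_left hy0
  obtain ⟨b', h1, h2⟩ := s.euler D hx b
  rw [hb, mul_zero] at h1
  have hb' := (mul_eq_zero.1 h1.symm).resolve_right hDy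
  rw [← s.sig_φ b]
  have : s.sig (s.φ b) = (s.φ b).coeff.sum fun u c => c • s.mu u := rfl
  rw [this, Finsupp.sum]
  refine Subalgebra.sum_mem _ fun u hu => Subalgebra.smul_mem _ ?_ _
  have h3 := h2 u
  rw [hb', map_zero, AddMonoidAlgebra.coeff_zero, Finsupp.zero_apply] at h3
  have hu0 : u.2 = 0 := by
    exact_mod_cast (mul_eq_zero.1 h3.symm).resolve_right (Finsupp.mem_support_iff.1 hu)
  simp only [mu, mon, hu0]
  simp only [Int.zero_emod, Int.zero_ediv, Int.toNat_zero, pow_zero, mul_one]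
  exact Subalgebra.prod_mem _ fun i _ =>
    Subalgebra.pow_mem _ (Algebra.subset_adjoin (Set.mem_range_self i)) _

end Setup
end Dan

/-- On `B̂ = ℂ[x₁,…,xₙ,y,z]/(x^{[m]}z − y^r)` with all `mᵢ ≥ 2` and
`r ≥ 2`, every nonzero locally nilpotent `ℂ`-derivation has kernel exactly the
image of the polynomial subring `ℂ[x₁,…,xₙ]`. -/
theorem stmt13 (n r : ℕ) (hr : 2 ≤ r) (m : Fin n → ℕ) (hm : ∀ i, 2 ≤ m i)
    (ι : MvPolynomial (Fin n) ℂ →+* MvPolynomial (Fin n ⊕ Fin 2) ℂ)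
    (hι : ι = (MvPolynomial.rename (Sum.inl : Fin n → Fin n ⊕ Fin 2)).toRingHom)
    (y z xm : MvPolynomial (Fin n ⊕ Fin 2) ℂ)
    (hy : y = MvPolynomial.X (Sum.inr 0)) (hz : z = MvPolynomial.X (Sum.inr 1))
    (hxm : xm = ∏ i, MvPolynomial.X (Sum.inl i) ^ m i)
    (I : Ideal (MvPolynomial (Fin n ⊕ Fin 2) ℂ))
    (hI : I = Ideal.span {xm * z - y ^ r})
    (D : Derivation ℂ
      (MvPolynomial (Fin n ⊕ Fin 2) ℂ ⧸ I) (MvPolynomial (Fin n ⊕ Fin 2) ℂ ⧸ I))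
    (hD : D ≠ 0) (hln : ∀ b, ∃ k : ℕ, (⇑D)^[k] b = 0) :
    ∀ b, D b = 0 ↔ b ∈ RingHom.range ((Ideal.Quotient.mk I).comp ι) := by
  let ψ : MvPolynomial (Fin n ⊕ Fin 2) ℂ →ₐ[ℂ] Dan.L n := MvPolynomial.aeval
    (Sum.elim (fun i => .single (Pi.single i 1, 0) 1)
      ![.single (0, 1) 1, .single (fun i => - (m i : ℤ), (r : ℤ)) 1])
  have ψx : ∀ i, ψ (X (Sum.inl i)) = .single (Pi.single i 1, 0) 1 := fun i => by simp [ψ]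
  have ψy : ψ y = .single (0, 1) 1 := by simp [ψ, hy]
  have ψz : ψ z = .single (fun i => - (m i : ℤ), (r : ℤ)) 1 := by simp [ψ, hz]
  have hker : ∀ a ∈ I, ψ a = 0 := by
    intro a ha
    rw [hI, Ideal.mem_span_singleton] at ha
    obtain ⟨c, rfl⟩ := ha
    rw [map_mul, map_sub, map_mul, map_pow, ψy, ψz, hxm, map_prod]
    simp only [map_pow, ψx, AddMonoidAlgebra.single_pow, AddMonoidAlgebra.prod_single,
      AddMonoidAlgebra.single_mul_single]
    have : (∑ i, m i • ((Pi.single i 1, 0) : Dan.G n)) + (fun i => - (m i : ℤ), (r : ℤ))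
        = r • ((0, 1) : Dan.G n) := by
      ext j
      · simp only [Prod.fst_add, Prod.fst_sum, Prod.smul_fst, Pi.add_apply, Finset.sum_apply,
          Pi.smul_apply, Pi.single_apply]
        simp
      · simp [Prod.snd_sum]
    rw [this]
    simp
  let s : Dan.Setup n r m (MvPolynomial (Fin n ⊕ Fin 2) ℂ ⧸ I) :=
    { x := fun i => Ideal.Quotient.mk I (X (Sum.inl i))
      y := Ideal.Quotient.mk I y
      z := Ideal.Quotient.mk I z
      rel := by
        simp only [← map_pow, ← map_prod, ← map_mul]
        rw [Ideal.Quotient.eq, ← hxm, hI]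
        exact Ideal.mem_span_singleton_self _
      φ := Ideal.Quotient.liftₐ I ψ hker
      φx := ψx
      φy := ψy
      φz := ψz
      span := by
        intro b
        obtain ⟨p, rfl⟩ := Ideal.Quotient.mk_surjective b
        induction p using MvPolynomial.induction_on' with
        | monomial d c =>
          have : Ideal.Quotient.mk I (monomial d c) = c • Ideal.Quotient.mk I (monomial d 1) := by
            rw [← Ideal.Quotient.mkₐ_eq_mk ℂ, ← map_smul, smul_monomial, smul_eq_mul, mul_one]
          rw [this]
          refine Submodule.smul_mem _ _ (Submodule.subset_span
            ⟨(fun i => d (Sum.inl i), d (Sum.inr 0), d (Sum.inr 1)), ?_⟩)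
          simp only [← map_pow, ← map_prod, ← map_mul]
          congr 1
          rw [monomial_eq, Finsupp.prod_fintype _ _ (by simp), Fintype.prod_sum_type,
            Fin.prod_univ_two, hy, hz, C_1, one_mul, mul_assoc]
        | add p q hp hq => rw [map_add]; exact Submodule.add_mem _ hp hq
      hr := hr
      hm := hm }
  intro b
  constructor
  · intro hb
    have := s.main D hln hD b hb
    have hle : Algebra.adjoin ℂ (Set.range s.x) ≤
        ((Ideal.Quotient.mkₐ ℂ I).comp
          (MvPolynomial.rename (Sum.inl : Fin n → Fin n ⊕ Fin 2))).range := by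
      rw [Algebra.adjoin_le_iff]
      rintro _ ⟨i, rfl⟩
      exact ⟨X i, by simp [s]⟩
    obtain ⟨p, hp⟩ := hle this
    exact ⟨p, by rw [hι]; exact hp⟩
  · rintro ⟨p, rfl⟩
    rw [hι]
    induction p using MvPolynomial.induction_on with
    | C a =>
      have : ((Ideal.Quotient.mk I).comp
        (MvPolynomial.rename (Sum.inl : Fin n → Fin n ⊕ Fin 2)).toRingHom) (C a)
        = algebraMap ℂ _ a := by
        simp; rfl
      rw [this, Derivation.map_algebraMap]
    | add p q hp hq => rw [map_add, map_add, hp, hq, add_zero]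
    | mul_X p i hp =>
      have : ((Ideal.Quotient.mk I).comp
        (MvPolynomial.rename (Sum.inl : Fin n → Fin n ⊕ Fin 2)).toRingHom) (X i) = s.x i := by
        simp [s]
      rw [map_mul, Derivation.leibniz, hp, this, s.Dx D hln]
      simp
end

section
/- Let B be the coordinate ring of X = {x₁^{m₁}⋯xₙ^{mₙ} z = Q(x,y)} ⊂ ℂ^{n+2}, where Q is monic in y of degree r ≥ 2 and all mᵢ ≥ 2. Then the subring of B consisting of elements annihilated by every locally nilpotent ℂ-derivation of B (the Makar-Limanov invariant ML(X)) equals ℂ[x₁,…,xₙ]. -/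
open MvPolynomial

namespace MLInv

/-- The lexicographically ordered exponent group; the first coordinate is minus the `y`-degree. -/
abbrev G (n : ℕ) := ℤ ×ₗ Lex (Fin n → ℤ)

/-- Hahn series with exponents in `G n`. -/
abbrev H (n : ℕ) := HahnSeries (G n) ℂ

/-- All exponents of `x` are at least `a`. -/
def LB {n : ℕ} (x : H n) (a : G n) : Prop := ∀ g < a, x.coeff g = 0

lemma LB.mono {n : ℕ} {x : H n} {a b : G n} (h : LB x a) (hab : b ≤ a) : LB x b :=
  fun g hg => h g (lt_of_lt_of_le hg hab)

lemma LB.add {n : ℕ} {x y : H n} {a : G n} (h : LB x a) (h' : LB y a) : LB (x + y) a := by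
  intro g hg
  rw [HahnSeries.coeff_add, h g hg, h' g hg, add_zero]

lemma LB.smul {n : ℕ} {x : H n} {a : G n} (c : ℂ) (h : LB x a) : LB (c • x) a := by
  intro g hg
  rw [HahnSeries.coeff_smul, h g hg, smul_zero]

lemma LB.mul {n : ℕ} {x y : H n} {a b : G n} (h : LB x a) (h' : LB y b) :
    LB (x * y) (a + b) := by
  intro g hg
  rw [HahnSeries.coeff_mul]
  refine Finset.sum_eq_zero fun ij hij => ?_
  have hs : ij.1 + ij.2 = g := by
    have := hij
    simp at this
    exact this.2.2
  by_cases h1 : ij.1 < a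
  · rw [h _ h1, zero_mul]
  · by_cases h2 : ij.2 < b
    · rw [h' _ h2, mul_zero]
    · exfalso
      have := add_le_add (not_lt.1 h1) (not_lt.1 h2)
      rw [hs] at this
      exact absurd hg (not_lt.2 this)

lemma LB.coeff_mul {n : ℕ} {x y : H n} {a b : G n} (h : LB x a) (h' : LB y b) :
    (x * y).coeff (a + b) = x.coeff a * y.coeff b := by
  rw [HahnSeries.coeff_mul]
  have key : ∀ ij : G n × G n, ij.1 + ij.2 = a + b → ij ≠ (a, b) →
      x.coeff ij.1 * y.coeff ij.2 = 0 := by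
    intro ij hs hne
    by_cases h1 : ij.1 < a
    · rw [h _ h1, zero_mul]
    · by_cases h2 : ij.2 < b
      · rw [h' _ h2, mul_zero]
      · exfalso
        have h1' := not_lt.1 h1
        have h2' := not_lt.1 h2
        have e1 : ij.1 = a := by
          by_contra hh
          have : a < ij.1 := lt_of_le_of_ne h1' (Ne.symm hh)
          have := add_lt_add_of_lt_of_le this h2'
          rw [hs] at this
          exact lt_irrefl _ this
        have e2 : ij.2 = b := by
          rw [e1] at hs
          exact add_left_cancel hs
        exact hne (Prod.ext e1 e2)
  rw [Finset.sum_eq_single (a, b)]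
  · intro ij hij hne
    have := hij
    simp at this
    exact key ij this.2.2 hne
  · intro hni
    simp at hni
    by_cases hx : x.coeff a = 0
    · simp [hx]
    · by_cases hy : y.coeff b = 0
      · simp [hy]
      · exact absurd hy (by simpa using hni hx)

lemma LB.order {n : ℕ} {x : H n} {a : G n} (h : LB x a) (hc : x.coeff a ≠ 0) : x.order = a := by
  apply le_antisymm
  · exact HahnSeries.order_le_of_coeff_ne_zero hc
  · by_contra hlt
    have := h _ (not_le.1 hlt)
    rw [HahnSeries.coeff_order_eq_zero] at this
    rw [this] at hc
    simp at hc

lemma LB_order {n : ℕ} (x : H n) : LB x x.order := fun _ hg =>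
  HahnSeries.coeff_eq_zero_of_lt_order hg

lemma LB.le_order {n : ℕ} {x : H n} {a : G n} (h : LB x a) (hx : x ≠ 0) : a ≤ x.order := by
  by_contra hlt
  have := h _ (not_le.1 hlt)
  rw [HahnSeries.coeff_order_eq_zero] at this
  exact hx this

/-- Exponent vectors of the generators. -/
def ev {n : ℕ} (i : Fin n) : G n := toLex (0, toLex (Pi.single i 1))
def fv (n : ℕ) : G n := toLex (-1, toLex 0)
def gv {n : ℕ} (r : ℕ) (m : Fin n → ℕ) : G n := toLex (-(r : ℤ), toLex fun i => -(m i : ℤ))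

/-- Exponent of the monomial `x^a y^j z^c`. -/
def wt {n : ℕ} (r : ℕ) (m : Fin n → ℕ) (a : Fin n → ℕ) (j c : ℕ) : G n :=
  ∑ i, a i • ev i + j • fv n + c • gv r m

lemma fst_add {n : ℕ} (a b : G n) : (ofLex (a + b)).1 = (ofLex a).1 + (ofLex b).1 := rfl
lemma snd_add {n : ℕ} (a b : G n) (i : Fin n) :
    (ofLex (ofLex (a + b)).2) i = (ofLex (ofLex a).2) i + (ofLex (ofLex b).2) i := rfl
lemma fst_nsmul {n : ℕ} (k : ℕ) (a : G n) : (ofLex (k • a)).1 = k * (ofLex a).1 := by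
  have : (ofLex (k • a)).1 = k • (ofLex a).1 := rfl
  rw [this, nsmul_eq_mul]
lemma snd_nsmul {n : ℕ} (k : ℕ) (a : G n) (i : Fin n) :
    (ofLex (ofLex (k • a)).2) i = k * (ofLex (ofLex a).2) i := by
  have : (ofLex (ofLex (k • a)).2) i = k • (ofLex (ofLex a).2) i := rfl
  rw [this, nsmul_eq_mul]

/-- first coordinate as additive hom -/
def fstHom (n : ℕ) : G n →+ ℤ where
  toFun g := (ofLex g).1
  map_zero' := rfl
  map_add' _ _ := rfl

/-- other coordinates as additive homs -/
def sndHom {n : ℕ} (i : Fin n) : G n →+ ℤ where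
  toFun g := (ofLex (ofLex g).2) i
  map_zero' := rfl
  map_add' _ _ := rfl

lemma ext_G {n : ℕ} {a b : G n} (h : fstHom n a = fstHom n b)
    (h' : ∀ i, sndHom i a = sndHom i b) : a = b := by
  apply ofLex.injective
  apply Prod.ext h
  apply ofLex.injective
  funext i
  exact h' i

@[simp] lemma fst_ev {n : ℕ} (i : Fin n) : fstHom n (ev i) = 0 := rfl
@[simp] lemma fst_fv {n : ℕ} : fstHom n (fv n) = -1 := rfl
@[simp] lemma fst_gv {n : ℕ} (r) (m : Fin n → ℕ) : fstHom n (gv r m) = -(r : ℤ) := rfl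
@[simp] lemma snd_ev {n : ℕ} (i k : Fin n) :
  sndHom k (ev i) = (Pi.single i 1 : Fin n → ℤ) k := rfl
@[simp] lemma snd_fv {n : ℕ} (k : Fin n) : sndHom k (fv n) = 0 := rfl
@[simp] lemma snd_gv {n : ℕ} (r) (m : Fin n → ℕ) (k : Fin n) :
  sndHom k (gv r m) = -(m k : ℤ) := rfl

lemma fst_wt {n : ℕ} (r : ℕ) (m : Fin n → ℕ) (a : Fin n → ℕ) (j c : ℕ) :
    fstHom n (wt r m a j c) = -(j + r * c : ℤ) := by
  simp only [wt, map_add, map_sum, map_nsmul, fst_ev, fst_fv, fst_gv]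
  simp; ring

lemma snd_wt {n : ℕ} (r : ℕ) (m : Fin n → ℕ) (a : Fin n → ℕ) (j c : ℕ) (k : Fin n) :
    sndHom k (wt r m a j c) = a k - c * m k := by
  simp only [wt, map_add, map_sum, map_nsmul, snd_ev, snd_fv, snd_gv]
  simp [Pi.single_apply]; ring

lemma lt_of_fst {n : ℕ} {a b : G n} (h : fstHom n a < fstHom n b) : a < b :=
  Prod.Lex.lt_iff.2 (Or.inl h)

lemma fst_mono {n : ℕ} {a b : G n} (h : a ≤ b) : fstHom n a ≤ fstHom n b := by
  by_contra hh
  exact absurd h (not_le.2 (lt_of_fst (not_le.1 hh)))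

lemma wt_inj {n : ℕ} {r : ℕ} {m : Fin n → ℕ} {a a' : Fin n → ℕ} {j j' c c' : ℕ}
    (hj : j < r) (hj' : j' < r) (h : wt r m a j c = wt r m a' j' c') :
    a = a' ∧ j = j' ∧ c = c' := by
  have h1 := congrArg (fstHom n) h
  rw [fst_wt, fst_wt] at h1
  have h1' : j + r * c = j' + r * c' := by
    have : (j + r * c : ℤ) = j' + r * c' := by linarith
    exact_mod_cast this
  have hc : c = c' := by
    have := congrArg (· / r) h1'
    simpa [Nat.add_mul_div_left _ _ (lt_of_le_of_lt (Nat.zero_le _) hj), Nat.div_eq_of_lt hj,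
      Nat.div_eq_of_lt hj'] using this
  subst hc
  refine ⟨?_, by omega, rfl⟩
  funext k
  have h2 := congrArg (sndHom k) h
  rw [snd_wt, snd_wt] at h2
  have : (a k : ℤ) = a' k := by linarith
  exact_mod_cast this

/-- Every element of `G n` in terms of a basis. -/
lemma G_eq {n : ℕ} (g : G n) : g = ∑ i, sndHom i g • ev i + (-(fstHom n g)) • fv n := by
  apply ext_G
  · simp only [map_add, map_sum, map_nsmul, map_zsmul, fst_ev, fst_fv, fst_gv]
    simp
  · intro k
    simp only [map_add, map_sum, map_nsmul, map_zsmul, snd_ev, snd_fv, snd_gv]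
    simp [Pi.single_apply]

lemma gv_rel {n : ℕ} (r : ℕ) (m : Fin n → ℕ) : ∑ i, m i • ev i + gv r m = r • fv n := by
  apply ext_G
  · simp only [map_add, map_sum, map_nsmul, map_zsmul, fst_ev, fst_fv, fst_gv]
    simp
  · intro k
    simp only [map_add, map_sum, map_nsmul, map_zsmul, snd_ev, snd_fv, snd_gv]
    simp [Pi.single_apply]

end MLInv

namespace MLInv

lemma map_wt {n : ℕ} (r : ℕ) (m : Fin n → ℕ) (D : G n →+ ℂ) (a : Fin n → ℕ) (j c : ℕ) :
    D (wt r m a j c) = ∑ i, (a i : ℂ) * D (ev i) + j * D (fv n) + c * D (gv r m) := by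
  simp only [wt, map_add, map_sum, map_nsmul]
  simp only [nsmul_eq_mul]

lemma wt_zero_ev {n : ℕ} (r : ℕ) (m : Fin n → ℕ) (i : Fin n) :
    wt r m (Pi.single i 1) 0 0 = ev i := by
  apply ext_G
  · rw [fst_wt]; simp
  · intro k
    rw [snd_wt]; simp [Pi.single_apply]

lemma wt_zero_fv {n : ℕ} (r : ℕ) (m : Fin n → ℕ) : wt r m 0 1 0 = fv n := by
  apply ext_G
  · rw [fst_wt]; simp
  · intro k
    rw [snd_wt]; simp

lemma wt_zero_gv {n : ℕ} (r : ℕ) (m : Fin n → ℕ) : wt r m 0 0 1 = gv r m := by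
  apply ext_G
  · rw [fst_wt]; simp
  · intro k
    rw [snd_wt]; simp

/-- The combinatorial heart: a homogeneous locally nilpotent derivation of the toric ring kills
all the `x_i`. -/
lemma comb {n r : ℕ} (hr : 2 ≤ r) {m : Fin n → ℕ} (hm : ∀ i, 2 ≤ m i)
    (D : G n →+ ℂ) (δ : G n) (hD : D ≠ 0)
    (hS : ∀ a j c, j < r → ∃ k : ℕ, D (wt r m a j c + k • δ) = 0 ∧ ∀ l ≤ k, ∃ a' j' c',
      wt r m a j c + l • δ = wt r m a' j' c') : ∀ i, D (ev i) = 0 := by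
  have hE : ∀ i : Fin n, ∃ k : ℕ, D (ev i + k • δ) = 0 ∧ ∀ l ≤ k, ∃ a' j' c',
      ev i + l • δ = wt r m a' j' c' := by
    intro i
    simpa [wt_zero_ev] using hS (Pi.single i 1) 0 0 (by omega)
  have hF : ∃ k : ℕ, D (fv n + k • δ) = 0 ∧ ∀ l ≤ k, ∃ a' j' c',
      fv n + l • δ = wt r m a' j' c' := by
    simpa [wt_zero_fv] using hS 0 1 0 (by omega)
  have hGG : ∃ k : ℕ, D (gv r m + k • δ) = 0 := by
    obtain ⟨k, hk, -⟩ := hS 0 0 1 (by omega)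
    exact ⟨k, by simpa [wt_zero_gv] using hk⟩
  clear hS
  choose d hd1 hd2 using hE
  obtain ⟨h, hh1, hh2⟩ := hF
  obtain ⟨g, hg1⟩ := hGG
  set lam : ℂ := - D δ with hlam
  have hdl : ∀ i, D (ev i) = d i * lam := by
    intro i
    have := hd1 i
    rw [map_add, map_nsmul, nsmul_eq_mul] at this
    rw [hlam]; linear_combination this
  have hhl : D (fv n) = h * lam := by
    have := hh1
    rw [map_add, map_nsmul, nsmul_eq_mul] at this
    rw [hlam]; linear_combination this
  have hgl : D (gv r m) = g * lam := by
    have := hg1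
    rw [map_add, map_nsmul, nsmul_eq_mul] at this
    rw [hlam]; linear_combination this
  have hlam0 : lam ≠ 0 := by
    intro h0
    apply hD
    ext x
    rw [G_eq x, map_add, map_sum]
    simp only [map_zsmul, hdl, hhl, h0]
    simp
  have hrel : ∑ i, m i * d i + g = r * h := by
    have := congrArg D (gv_rel r m)
    simp only [map_add, map_sum, map_nsmul, hdl, hhl, hgl] at this
    simp only [nsmul_eq_mul] at this
    have h2 : ((∑ i, m i * d i + g : ℕ) : ℂ) * lam = ((r * h : ℕ) : ℂ) * lam := by
      push_cast
      rw [add_mul, Finset.sum_mul]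
      simp only [mul_assoc]
      exact this
    exact_mod_cast mul_right_cancel₀ hlam0 h2
  have hval : ∀ (a : Fin n → ℕ) (j c : ℕ) (N : ℕ), D (wt r m a j c) = N * lam →
      ∑ i, a i * d i + j * h + c * g = N := by
    intro a j c N hN
    rw [map_wt] at hN
    simp only [hdl, hhl, hgl] at hN
    have h2 : ((∑ i, a i * d i + j * h + c * g : ℕ) : ℂ) * lam = (N : ℂ) * lam := by
      rw [← hN]
      push_cast
      rw [add_mul, add_mul, Finset.sum_mul]
      simp only [mul_assoc]
    exact_mod_cast mul_right_cancel₀ hlam0 h2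
  by_contra hcon
  push Not at hcon
  obtain ⟨i, hi⟩ := hcon
  have hdi : 0 < d i := by
    rcases Nat.eq_zero_or_pos (d i) with h0 | h0
    · rw [hdl, h0] at hi; simp at hi
    · exact h0
  have hhpos : 0 < h := by
    rcases Nat.eq_zero_or_pos h with h0 | h0
    · exfalso
      rw [h0, mul_zero] at hrel
      have h1 : ∑ i, m i * d i = 0 := by omega
      rw [Finset.sum_eq_zero_iff] at h1
      have := h1 i (Finset.mem_univ _)
      have h3 := hm i
      rcases Nat.mul_eq_zero.1 this with h4 | h4 <;> omega
    · exact h0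
  -- elements of weight zero
  have hzero : ∀ (a : Fin n → ℕ) (j c : ℕ), D (wt r m a j c) = 0 →
      j = 0 ∧ (∀ i, 0 < d i → a i = 0) ∧ (0 < g → c = 0) := by
    intro a j c h0
    have := hval a j c 0 (by simpa using h0)
    have hj : j * h = 0 := by omega
    have hc : c * g = 0 := by omega
    have hs : ∑ i, a i * d i = 0 := by omega
    rw [Finset.sum_eq_zero_iff] at hs
    refine ⟨?_, ?_, ?_⟩
    · rcases Nat.mul_eq_zero.1 hj with h4 | h4 <;> omega
    · intro i hi
      rcases Nat.mul_eq_zero.1 (hs i (Finset.mem_univ _)) with h4 | h4 <;> omega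
    · intro hg
      rcases Nat.mul_eq_zero.1 hc with h4 | h4 <;> omega
  set δf : ℤ := fstHom n δ with hδf
  -- consequences for f
  have cF : ∃ c : ℕ, (0 < g → c = 0) ∧ -1 + h * δf = -(r * c : ℤ) ∧
      ∀ i, 0 < d i → h * sndHom i δ = -(c * m i : ℤ) := by
    obtain ⟨a, j, c, hw⟩ := hh2 h le_rfl
    obtain ⟨hj, ha, hc⟩ := hzero a j c (by rw [← hw]; exact hh1)
    refine ⟨c, hc, ?_, ?_⟩
    · have := congrArg (fstHom n) hw
      rw [fst_wt, map_add, map_nsmul, fst_fv, hj, nsmul_eq_mul] at this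
      simpa using this
    · intro i hi
      have := congrArg (sndHom i) hw
      rw [snd_wt, map_add, map_nsmul, snd_fv, ha i hi, nsmul_eq_mul] at this
      simpa using this
  have cE : ∀ i, 0 < d i → ∃ c : ℕ, (0 < g → c = 0) ∧ d i * δf = -(r * c : ℤ) ∧
      1 + d i * sndHom i δ = -(c * m i : ℤ) := by
    intro i hi
    obtain ⟨a, j, c, hw⟩ := hd2 i (d i) le_rfl
    obtain ⟨hj, ha, hc⟩ := hzero a j c (by rw [← hw]; exact hd1 i)
    refine ⟨c, hc, ?_, ?_⟩
    · have := congrArg (fstHom n) hw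
      rw [fst_wt, map_add, map_nsmul, fst_ev, hj, nsmul_eq_mul] at this
      simpa using this
    · have := congrArg (sndHom i) hw
      rw [snd_wt, map_add, map_nsmul, snd_ev, ha i hi, nsmul_eq_mul] at this
      simpa using this
  obtain ⟨cf, cf0, cf1, cf2⟩ := cF
  have hg0 : g = 0 := by
    rcases Nat.eq_zero_or_pos g with h0 | h0
    · exact h0
    · exfalso
      obtain ⟨c, c0, c1, c2⟩ := cE i hdi
      rw [c0 h0] at c1
      rw [cf0 h0] at cf1
      have : δf = 0 := by
        have : (d i : ℤ) * δf = 0 := by simpa using c1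
        rcases mul_eq_zero.1 this with h5 | h5
        · exfalso; have : d i = 0 := by exact_mod_cast h5
          omega
        · exact h5
      rw [this] at cf1
      simp at cf1
  -- an element of weight one
  have hone : h = 1 ∨ ∃ k, d k = 1 := by
    obtain ⟨a, j, c, hw⟩ := hh2 (h - 1) (by omega)
    have hv : D (wt r m a j c) = ((1 : ℕ) : ℂ) * lam := by
      rw [← hw, map_add, map_nsmul, hhl, nsmul_eq_mul, Nat.cast_sub hhpos]
      rw [hlam]; push_cast; ring
    have h1 := hval a j c 1 hv
    rw [hg0] at h1
    by_cases hj : j * h = 0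
    · right
      have hs : ∑ i, a i * d i ≠ 0 := by omega
      obtain ⟨k, -, hk⟩ := Finset.exists_ne_zero_of_sum_ne_zero hs
      refine ⟨k, ?_⟩
      have hle : a k * d k ≤ ∑ i, a i * d i :=
        Finset.single_le_sum (f := fun i => a i * d i) (fun _ _ => Nat.zero_le _)
          (Finset.mem_univ k)
      have : a k * d k = 1 := by omega
      exact Nat.eq_one_of_mul_eq_one_left this
    · left
      have : j * h = 1 := by omega
      exact Nat.eq_one_of_mul_eq_one_left this
  rcases hone with h1 | ⟨k, hk⟩
  · obtain ⟨c, c0, c1, c2⟩ := cE i hdi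
    have e2 := cf2 i hdi
    rw [h1] at e2
    have hdv : (m i : ℤ) ∣ 1 := ⟨-c + d i * cf, by
      push_cast at e2
      linear_combination c2 - d i * e2⟩
    have h3 := hm i
    have := Int.le_of_dvd one_pos hdv
    omega
  · obtain ⟨c, c0, c1, c2⟩ := cE k (by omega)
    rw [hk] at c1
    have hdv : (r : ℤ) ∣ 1 := ⟨cf - h * c, by
      push_cast at c1
      linear_combination h * c1 - cf1⟩
    have := Int.le_of_dvd one_pos hdv
    omega

end MLInv

namespace MLInv

/-- Abstract data extracted from the coordinate ring. -/
structure Setup (n r : ℕ) (m : Fin n → ℕ) (B : Type) [CommRing B] [Algebra ℂ B] where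
  x : Fin n → B
  y : B
  z : B
  u : B
  φ : B →ₐ[ℂ] H n
  hx : ∀ i, LB (φ (x i)) (ev i) ∧ (φ (x i)).coeff (ev i) = 1
  hy : LB (φ y) (fv n) ∧ (φ y).coeff (fv n) = 1
  hz : LB (φ z) (gv r m) ∧ (φ z).coeff (gv r m) = 1
  rel : (∏ i, x i ^ m i) * z = y ^ r + u
  hu : u ∈ Submodule.span ℂ {b | ∃ (a : Fin n → ℕ) (j : ℕ), j < r ∧ b = (∏ i, x i ^ a i) * y ^ j}
  hspan : ∀ b : B, b ∈ Submodule.span ℂ (Set.range fun t : (Fin n → ℕ) × Fin r × ℕ =>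
    (∏ i, x i ^ t.1 i) * y ^ (t.2.1 : ℕ) * z ^ t.2.2)

namespace Setup

variable {n r : ℕ} {m : Fin n → ℕ} {B : Type} [CommRing B] [Algebra ℂ B]

/-- Monomials. -/
def M (S : Setup n r m B) (t : (Fin n → ℕ) × Fin r × ℕ) : B :=
  (∏ i, S.x i ^ t.1 i) * S.y ^ (t.2.1 : ℕ) * S.z ^ t.2.2

/-- Exponents of monomials. -/
def w (_S : Setup n r m B) (t : (Fin n → ℕ) × Fin r × ℕ) : G n := wt r m t.1 t.2.1 t.2.2

lemma w_inj (S : Setup n r m B) : Function.Injective S.w := by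
  rintro ⟨a, j, c⟩ ⟨a', j', c'⟩ h
  obtain ⟨h1, h2, h3⟩ := wt_inj j.2 j'.2 h
  simp only at h1 h3
  rw [h1, h3, Fin.ext h2]

/-- The leading-term relation between an element and its derivative. -/
def Tw (S : Setup n r m B) (D : Derivation ℂ B B) (δ : G n) (b : B) (γ : G n) (d : ℂ) : Prop :=
  (LB (S.φ b) γ ∧ (S.φ b).coeff γ = 1) ∧
    LB (S.φ (D b)) (γ + δ) ∧ (S.φ (D b)).coeff (γ + δ) = d

lemma Tw.mul {S : Setup n r m B} {D : Derivation ℂ B B} {δ : G n} {b b' : B} {γ γ' : G n}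
    {d d' : ℂ} (h : S.Tw D δ b γ d) (h' : S.Tw D δ b' γ' d') :
    S.Tw D δ (b * b') (γ + γ') (d + d') := by
  obtain ⟨⟨h1, h2⟩, h3, h4⟩ := h
  obtain ⟨⟨h1', h2'⟩, h3', h4'⟩ := h'
  refine ⟨⟨?_, ?_⟩, ?_, ?_⟩
  · rw [map_mul]; exact h1.mul h1'
  · rw [map_mul, h1.coeff_mul h1', h2, h2', one_mul]
  · rw [D.leibniz, map_add, smul_eq_mul, smul_eq_mul, map_mul, map_mul]
    refine LB.add ?_ ?_
    · rw [add_assoc]; exact h1.mul h3'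
    · rw [add_comm γ γ', add_assoc]; exact h1'.mul h3
  · rw [D.leibniz, map_add, smul_eq_mul, smul_eq_mul, map_mul, map_mul, HahnSeries.coeff_add]
    have e1 : (S.φ b * S.φ (D b')).coeff (γ + γ' + δ) = d' := by
      rw [add_assoc, h1.coeff_mul h3', h2, h4', one_mul]
    have e2 : (S.φ b' * S.φ (D b)).coeff (γ + γ' + δ) = d := by
      rw [add_comm γ γ', add_assoc, h1'.coeff_mul h3, h2', h4, one_mul]
    rw [e1, e2, add_comm]

lemma LB_one : LB (1 : H n) 0 ∧ (1 : H n).coeff 0 = 1 := by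
  refine ⟨fun g hg => ?_, by simp⟩
  rw [HahnSeries.coeff_one, if_neg hg.ne]

lemma Tw.one (S : Setup n r m B) (D : Derivation ℂ B B) (δ : G n) : S.Tw D δ 1 0 0 := by
  refine ⟨?_, ?_, ?_⟩
  · rw [map_one]; exact LB_one
  · rw [D.map_one_eq_zero, map_zero]; intro g _; rfl
  · rw [D.map_one_eq_zero, map_zero]; rfl

lemma Tw.pow {S : Setup n r m B} {D : Derivation ℂ B B} {δ : G n} {b : B} {γ : G n}
    {d : ℂ} (h : S.Tw D δ b γ d) (k : ℕ) : S.Tw D δ (b ^ k) (k • γ) (k * d) := by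
  induction k with
  | zero => simpa only [pow_zero, zero_nsmul, Nat.cast_zero, zero_mul] using Tw.one S D δ
  | succ k ih =>
    have := ih.mul h
    rw [pow_succ, succ_nsmul]
    convert this using 1
    push_cast; ring

lemma Tw.prod {S : Setup n r m B} {D : Derivation ℂ B B} {δ : G n} {I : Type} (s : Finset I)
    {b : I → B} {γ : I → G n}
    {d : I → ℂ} (h : ∀ i, S.Tw D δ (b i) (γ i) (d i)) :
    S.Tw D δ (∏ i ∈ s, b i) (∑ i ∈ s, γ i) (∑ i ∈ s, d i) := by
  classical
  induction s using Finset.induction_on with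
  | empty => simpa only [Finset.prod_empty, Finset.sum_empty] using Tw.one S D δ
  | insert i s hi ih =>
    rw [Finset.prod_insert hi, Finset.sum_insert hi, Finset.sum_insert hi]
    exact (h i).mul ih

lemma Tw.mono {S : Setup n r m B} {D : Derivation ℂ B B} {δ : G n} 
    {dx : Fin n → ℂ} {dy dz : ℂ} (hx : ∀ i, S.Tw D δ (S.x i) (ev i) (dx i))
    (hy : S.Tw D δ S.y (fv n) dy) (hz : S.Tw D δ S.z (gv r m) dz) (a : Fin n → ℕ) (j c : ℕ) :
    S.Tw D δ ((∏ i, S.x i ^ a i) * S.y ^ j * S.z ^ c) (wt r m a j c)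
      (∑ i, a i * dx i + j * dy + c * dz) :=
  ((Tw.prod Finset.univ fun i => (hx i).pow (a i)).mul (hy.pow j)).mul (hz.pow c)

lemma M_lead (S : Setup n r m B) (t) : LB (S.φ (S.M t)) (S.w t) ∧
    (S.φ (S.M t)).coeff (S.w t) = 1 := by
  have h0 : ∀ (b : B) (γ : G n), LB (S.φ b) γ ∧ (S.φ b).coeff γ = 1 → S.Tw 0 0 b γ 0 := by
    intro b γ h
    refine ⟨h, ?_, ?_⟩
    · rw [Derivation.zero_apply, map_zero]; intro g _; rfl
    · rw [Derivation.zero_apply, map_zero]; rfl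
  exact (Tw.mono (fun i => h0 _ _ (S.hx i)) (h0 _ _ S.hy) (h0 _ _ S.hz) t.1 t.2.1 t.2.2).1

lemma sum_lead (S : Setup n r m B) (c : ((Fin n → ℕ) × Fin r × ℕ) →₀ ℂ) (hc : c ≠ 0) :
    ∃ t ∈ c.support, (∀ t' ∈ c.support, S.w t ≤ S.w t') ∧
      LB (S.φ (c.sum fun i a => a • S.M i)) (S.w t) ∧
      (S.φ (c.sum fun i a => a • S.M i)).coeff (S.w t) = c t := by
  obtain ⟨t, ht, hmin⟩ := Finset.exists_min_image c.support S.w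
    (Finsupp.support_nonempty_iff.2 hc)
  refine ⟨t, ht, hmin, ?_, ?_⟩
  · intro g hg
    rw [Finsupp.sum, map_sum, HahnSeries.coeff_sum]
    refine Finset.sum_eq_zero fun t' ht' => ?_
    rw [map_smul, HahnSeries.coeff_smul, (S.M_lead t').1 g (lt_of_lt_of_le hg (hmin t' ht')),
      smul_zero]
  · rw [Finsupp.sum, map_sum, HahnSeries.coeff_sum, Finset.sum_eq_single t]
    · rw [map_smul, HahnSeries.coeff_smul, (S.M_lead t).2, smul_eq_mul, mul_one]
    · intro t' ht' hne
      have hlt : S.w t < S.w t' := lt_of_le_of_ne (hmin t' ht') (fun h => hne (S.w_inj h.symm))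
      rw [map_smul, HahnSeries.coeff_smul, (S.M_lead t').1 _ hlt, smul_zero]
    · intro h; exact absurd ht h

lemma exists_repr (S : Setup n r m B) (b : B) :
    ∃ c : ((Fin n → ℕ) × Fin r × ℕ) →₀ ℂ, (c.sum fun i a => a • S.M i) = b :=
  Finsupp.mem_span_range_iff_exists_finsupp.1 (S.hspan b)

lemma order_eq (S : Setup n r m B) (b : B) (hb : b ≠ 0) :
    ∃ t, S.φ b ≠ 0 ∧ (S.φ b).order = S.w t := by
  obtain ⟨c, rfl⟩ := S.exists_repr b
  have hc : c ≠ 0 := by rintro rfl; simp at hb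
  obtain ⟨t, ht, -, h1, h2⟩ := S.sum_lead c hc
  have hne : c t ≠ 0 := Finsupp.mem_support_iff.1 ht
  refine ⟨t, ?_, h1.order (by rw [h2]; exact hne)⟩
  intro h0
  rw [h0] at h2
  exact hne h2.symm

lemma φ_ne (S : Setup n r m B) {b : B} (hb : b ≠ 0) : S.φ b ≠ 0 := (S.order_eq b hb).choose_spec.1

lemma mem_span_of_LB (S : Setup n r m B) (b : B) (γ : G n) (h : LB (S.φ b) γ) :
    b ∈ Submodule.span ℂ {b' | ∃ t, γ ≤ S.w t ∧ b' = S.M t} := by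
  obtain ⟨c, rfl⟩ := S.exists_repr b
  by_cases hc : c = 0
  · rw [hc]; simp
  obtain ⟨t, ht, hmin, h1, h2⟩ := S.sum_lead c hc
  have hle : γ ≤ S.w t := by
    by_contra hlt
    have := h _ (not_le.1 hlt)
    rw [h2] at this
    exact Finsupp.mem_support_iff.1 ht this
  refine Submodule.sum_mem _ fun t' ht' => Submodule.smul_mem _ _ (Submodule.subset_span ?_)
  exact ⟨t', hle.trans (hmin t' ht'), rfl⟩

/-- If a derivation kills the generators it is zero. -/
lemma D_zero (S : Setup n r m B) (D : Derivation ℂ B B) (hx : ∀ i, D (S.x i) = 0)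
    (hy : D S.y = 0) (hz : D S.z = 0) : D = 0 := by
  have hpow : ∀ (b : B) (k : ℕ), D b = 0 → D (b ^ k) = 0 := by
    intro b k hb
    rw [D.leibniz_pow, hb, smul_zero, smul_zero]
  have hmul : ∀ b b' : B, D b = 0 → D b' = 0 → D (b * b') = 0 := by
    intro b b' h h'
    rw [D.leibniz, h, h', smul_zero, smul_zero, add_zero]
  ext b
  rw [Derivation.zero_apply]
  refine Submodule.span_induction (p := fun b _ => D b = 0) ?_ ?_ ?_ ?_ (S.hspan b)
  · rintro _ ⟨t, rfl⟩
    refine hmul _ _ (hmul _ _ ?_ (hpow _ _ hy)) (hpow _ _ hz)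
    refine Finset.prod_induction _ (fun b => D b = 0) hmul D.map_one_eq_zero ?_
    intro i _
    exact hpow _ _ (hx i)
  · exact map_zero D
  · intro a b _ _ ha hb
    rw [map_add, ha, hb, add_zero]
  · intro c a _ ha
    rw [D.map_smul, ha, smul_zero]

/-- Existence of the degree of a nonzero derivation. -/
lemma exists_delta (S : Setup n r m B) (D : Derivation ℂ B B) (hD : D ≠ 0) :
    ∃ (δ : G n) (dx : Fin n → ℂ) (dy dz : ℂ), (∀ i, S.Tw D δ (S.x i) (ev i) (dx i)) ∧
      S.Tw D δ S.y (fv n) dy ∧ S.Tw D δ S.z (gv r m) dz ∧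
      ¬ ((∀ i, dx i = 0) ∧ dy = 0 ∧ dz = 0) := by
  classical
  let gen : Fin n ⊕ Fin 2 → B := Sum.elim S.x ![S.y, S.z]
  let ge : Fin n ⊕ Fin 2 → G n := Sum.elim ev ![fv n, gv r m]
  have hgen : ∀ u, LB (S.φ (gen u)) (ge u) ∧ (S.φ (gen u)).coeff (ge u) = 1 := by
    rintro (i | i)
    · exact S.hx i
    · fin_cases i
      · exact S.hy
      · exact S.hz
  let F : Finset (Fin n ⊕ Fin 2) := Finset.univ.filter fun u => D (gen u) ≠ 0
  have hF : F.Nonempty := by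
    by_contra hne
    rw [Finset.not_nonempty_iff_eq_empty, Finset.filter_eq_empty_iff] at hne
    simp only [not_not] at hne
    exact hD (S.D_zero D (fun i => hne (Finset.mem_univ (Sum.inl i)))
      (hne (Finset.mem_univ (Sum.inr 0))) (hne (Finset.mem_univ (Sum.inr 1))))
  obtain ⟨u0, hu0, hmin⟩ := Finset.exists_min_image F
    (fun u => (S.φ (D (gen u))).order - ge u) hF
  set δ : G n := (S.φ (D (gen u0))).order - ge u0 with hδ
  have hT : ∀ u, S.Tw D δ (gen u) (ge u) ((S.φ (D (gen u))).coeff (ge u + δ)) := by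
    intro u
    refine ⟨hgen u, ?_, rfl⟩
    by_cases h0 : D (gen u) = 0
    · rw [h0, map_zero]; intro g _; rfl
    · refine (LB_order _).mono ?_
      have := hmin u (Finset.mem_filter.2 ⟨Finset.mem_univ _, h0⟩)
      rw [le_sub_iff_add_le] at this
      rwa [add_comm]
  refine ⟨δ, fun i => (S.φ (D (gen (Sum.inl i)))).coeff (ge (Sum.inl i) + δ),
    (S.φ (D (gen (Sum.inr 0)))).coeff (ge (Sum.inr 0) + δ),
    (S.φ (D (gen (Sum.inr 1)))).coeff (ge (Sum.inr 1) + δ), fun i => hT (Sum.inl i),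
    hT (Sum.inr 0), hT (Sum.inr 1), ?_⟩
  rintro ⟨h1, h2, h3⟩
  have hall : ∀ u, (S.φ (D (gen u))).coeff (ge u + δ) = 0 := by
    rintro (i | i)
    · exact h1 i
    · fin_cases i
      · exact h2
      · exact h3
  have := hall u0
  rw [hδ, add_sub_cancel, HahnSeries.coeff_order_eq_zero] at this
  exact S.φ_ne (Finset.mem_filter.1 hu0).2 this

/-- The relation among the leading coefficients. -/
lemma dz_rel (S : Setup n r m B) (D : Derivation ℂ B B) {δ : G n}
    {dx : Fin n → ℂ} {dy dz : ℂ} (hx : ∀ i, S.Tw D δ (S.x i) (ev i) (dx i))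
    (hy : S.Tw D δ S.y (fv n) dy) (hz : S.Tw D δ S.z (gv r m) dz) :
    ∑ i, m i * dx i + dz = r * dy := by
  have h1 := (Tw.prod Finset.univ fun i => (hx i).pow (m i)).mul hz
  have h2 := hy.pow r
  rw [gv_rel] at h1
  have hu : LB (S.φ (D S.u)) (r • fv n + δ) ∧ (S.φ (D S.u)).coeff (r • fv n + δ) = 0 := by
    refine Submodule.span_induction (p := fun b _ => LB (S.φ (D b)) (r • fv n + δ) ∧
      (S.φ (D b)).coeff (r • fv n + δ) = 0) ?_ ?_ ?_ ?_ S.hu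
    · rintro _ ⟨a, j, hj, rfl⟩
      have h3 := Tw.mono hx hy hz a j 0
      rw [pow_zero, mul_one] at h3
      have hlt : r • fv n + δ < wt r m a j 0 + δ := by
        apply lt_of_fst
        rw [map_add, map_add, map_nsmul, fst_wt, fst_fv]
        have : (j : ℤ) < r := by exact_mod_cast hj
        simp only [nsmul_eq_mul]
        push_cast
        linarith
      exact ⟨h3.2.1.mono hlt.le, h3.2.1 _ hlt⟩
    · rw [map_zero, map_zero]
      exact ⟨fun _ _ => rfl, rfl⟩
    · intro a b _ _ ha hb
      rw [map_add, map_add, HahnSeries.coeff_add, ha.2, hb.2, add_zero]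
      exact ⟨ha.1.add hb.1, rfl⟩
    · intro c a _ ha
      rw [D.map_smul, map_smul, HahnSeries.coeff_smul, ha.2, smul_zero]
      exact ⟨ha.1.smul c, rfl⟩
  have e1 := h1.2.2
  rw [S.rel, map_add, map_add, HahnSeries.coeff_add, hu.2, add_zero, h2.2.2] at e1
  exact e1.symm

/-- The homogenization of a nonzero derivation. -/
lemma exists_gr (S : Setup n r m B) (D : Derivation ℂ B B) (hD : D ≠ 0) :
    ∃ (δ : G n) (E : G n →+ ℂ), E ≠ 0 ∧ ∀ b γ, LB (S.φ b) γ →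
      LB (S.φ (D b)) (γ + δ) ∧
      (S.φ (D b)).coeff (γ + δ) = E γ * (S.φ b).coeff γ := by
  obtain ⟨δ, dx, dy, dz, hx, hy, hz, hne⟩ := S.exists_delta D hD
  have hrel := S.dz_rel D hx hy hz
  let E : G n →+ ℂ :=
    { toFun := fun g => ∑ i, ((sndHom i g : ℤ) : ℂ) * dx i - ((fstHom n g : ℤ) : ℂ) * dy
      map_zero' := by simp
      map_add' := by
        intro a b
        simp only [map_add, Int.cast_add, add_mul, Finset.sum_add_distrib]
        ring }
  have hEdef : ∀ g, E g = ∑ i, ((sndHom i g : ℤ) : ℂ) * dx i - ((fstHom n g : ℤ) : ℂ) * dy :=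
    fun _ => rfl
  have hEx : ∀ i, E (ev i) = dx i := by
    intro i; rw [hEdef]
    simp only [snd_ev, fst_ev]
    simp [Pi.single_apply]
  have hEy : E (fv n) = dy := by
    rw [hEdef]
    simp only [snd_fv, fst_fv]
    simp
  have hEz : E (gv r m) = dz := by
    rw [hEdef]
    simp only [snd_gv, fst_gv]
    push_cast
    simp only [neg_mul, Finset.sum_neg_distrib]
    linear_combination -hrel
  refine ⟨δ, E, ?_, ?_⟩
  · intro h0
    apply hne
    refine ⟨fun i => ?_, ?_, ?_⟩
    · rw [← hEx, h0]; rfl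
    · rw [← hEy, h0]; rfl
    · rw [← hEz, h0]; rfl
  · intro b γ hb
    have hspan := S.mem_span_of_LB b γ hb
    clear hb
    refine Submodule.span_induction (p := fun b _ => LB (S.φ (D b)) (γ + δ) ∧
      (S.φ (D b)).coeff (γ + δ) = E γ * (S.φ b).coeff γ) ?_ ?_ ?_ ?_ hspan
    · rintro _ ⟨t, ht, rfl⟩
      have h3 := Tw.mono hx hy hz t.1 t.2.1 t.2.2
      have h4 : S.Tw D δ (S.M t) (S.w t) (E (S.w t)) := by
        have : E (S.w t) = ∑ i, (t.1 i : ℂ) * dx i + ((t.2.1 : ℕ) : ℂ) * dy + t.2.2 * dz := by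
          rw [w, map_wt, hEy, hEz]
          simp only [hEx]
        rw [this]
        exact h3
      refine ⟨h4.2.1.mono (add_le_add_left ht δ), ?_⟩
      rcases eq_or_lt_of_le ht with heq | hlt
      · rw [heq, h4.2.2, h4.1.2, mul_one]
      · rw [h4.2.1 _ (add_lt_add_left hlt δ), h4.1.1 _ hlt, mul_zero]
    · simp only [map_zero]
      exact ⟨fun _ _ => rfl, by simp⟩
    · intro a b _ _ ha hb
      rw [map_add, map_add, map_add, HahnSeries.coeff_add, HahnSeries.coeff_add, ha.2, hb.2,
        mul_add]
      exact ⟨ha.1.add hb.1, rfl⟩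
    · intro c a _ ha
      rw [D.map_smul, map_smul, map_smul, HahnSeries.coeff_smul, HahnSeries.coeff_smul, ha.2,
        smul_eq_mul, smul_eq_mul]
      exact ⟨ha.1.smul c, by ring⟩

end Setup
end MLInv

namespace MLInv
namespace Setup

variable {n r : ℕ} {m : Fin n → ℕ} {B : Type} [CommRing B] [Algebra ℂ B]

lemma chain (S : Setup n r m B) (D : Derivation ℂ B B) (hN : ∀ c, ∃ k : ℕ, (⇑D)^[k] c = 0)
    {δ : G n} {E : G n →+ ℂ} (hE : ∀ b γ, LB (S.φ b) γ →
      LB (S.φ (D b)) (γ + δ) ∧ (S.φ (D b)).coeff (γ + δ) = E γ * (S.φ b).coeff γ)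
    (t) : ∃ k : ℕ, E (S.w t + k • δ) = 0 ∧ ∀ l ≤ k, ∃ t', S.w t + l • δ = S.w t' := by
  classical
  have claim : ∀ k : ℕ, (∀ l < k, E (S.w t + l • δ) ≠ 0) →
      LB (S.φ ((⇑D)^[k] (S.M t))) (S.w t + k • δ) ∧
      (S.φ ((⇑D)^[k] (S.M t))).coeff (S.w t + k • δ) ≠ 0 := by
    intro k
    induction k with
    | zero =>
      intro _
      rw [zero_nsmul, add_zero, Function.iterate_zero, id]
      exact ⟨(S.M_lead t).1, by rw [(S.M_lead t).2]; exact one_ne_zero⟩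
    | succ k ih =>
      intro h
      obtain ⟨h1, h2⟩ := ih fun l hl => h l (by omega)
      obtain ⟨h3, h4⟩ := hE _ _ h1
      rw [Function.iterate_succ_apply', succ_nsmul, ← add_assoc]
      exact ⟨h3, by rw [h4]; exact mul_ne_zero (h k (by omega)) h2⟩
  have hex : ∃ k : ℕ, E (S.w t + k • δ) = 0 := by
    by_contra hcon
    push Not at hcon
    obtain ⟨K, hK⟩ := hN (S.M t)
    have := (claim K fun l _ => hcon l).2
    rw [hK, map_zero] at this
    exact this rfl
  refine ⟨Nat.find hex, Nat.find_spec hex, ?_⟩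
  intro l hl
  obtain ⟨h1, h2⟩ := claim l fun l' hl' => Nat.find_min hex (lt_of_lt_of_le hl' hl)
  have hne : (⇑D)^[l] (S.M t) ≠ 0 := by
    intro h0
    rw [h0, map_zero] at h2
    exact h2 rfl
  obtain ⟨t', -, ht'⟩ := S.order_eq _ hne
  exact ⟨t', by rw [← ht', h1.order h2]⟩

/-- minus the `y`-degree -/
noncomputable def v (S : Setup n r m B) (b : B) : ℤ := fstHom n (S.φ b).order

lemma mul_ne (S : Setup n r m B) {a b : B} (ha : a ≠ 0) (hb : b ≠ 0) : a * b ≠ 0 := by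
  intro h
  have := mul_ne_zero (S.φ_ne ha) (S.φ_ne hb)
  rw [← map_mul, h, map_zero] at this
  exact this rfl

lemma one_ne (S : Setup n r m B) : (1 : B) ≠ 0 := by
  intro h
  have : S.φ 1 = S.φ 0 := by rw [h]
  rw [map_one, map_zero] at this
  exact one_ne_zero this

lemma pow_ne (S : Setup n r m B) {a : B} (ha : a ≠ 0) (k : ℕ) : a ^ k ≠ 0 := by
  induction k with
  | zero => rw [pow_zero]; exact S.one_ne
  | succ k ih => rw [pow_succ]; exact S.mul_ne ih ha

lemma v_mul (S : Setup n r m B) {a b : B} (ha : a ≠ 0) (hb : b ≠ 0) :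
    S.v (a * b) = S.v a + S.v b := by
  rw [v, map_mul, HahnSeries.order_mul (S.φ_ne ha) (S.φ_ne hb), map_add]; rfl

lemma v_pow (S : Setup n r m B) {a : B} (ha : a ≠ 0) (k : ℕ) : S.v (a ^ k) = k * S.v a := by
  induction k with
  | zero => rw [pow_zero, v, map_one, HahnSeries.order_one, map_zero]; simp
  | succ k ih =>
    rw [pow_succ, S.v_mul (S.pow_ne ha k) ha, ih]; push_cast; ring

lemma v_nonpos (S : Setup n r m B) {b : B} (hb : b ≠ 0) : S.v b ≤ 0 := by
  obtain ⟨t, -, ht⟩ := S.order_eq b hb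
  rw [v, ht, w, fst_wt]
  have : (0 : ℤ) ≤ ((t.2.1 : ℕ) : ℤ) + r * t.2.2 := by positivity
  linarith

/-- All exponents have first coordinate at least `N`. -/
def Ge (S : Setup n r m B) (N : ℤ) (b : B) : Prop := ∀ g, fstHom n g < N → (S.φ b).coeff g = 0

lemma Ge.add {S : Setup n r m B} {N : ℤ} {a b : B} (ha : S.Ge N a) (hb : S.Ge N b) :
    S.Ge N (a + b) := by
  intro g hg
  rw [map_add, HahnSeries.coeff_add, ha g hg, hb g hg, add_zero]

lemma Ge.sub {S : Setup n r m B} {N : ℤ} {a b : B} (ha : S.Ge N a) (hb : S.Ge N b) :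
    S.Ge N (a - b) := by
  intro g hg
  rw [map_sub, HahnSeries.coeff_sub, ha g hg, hb g hg, sub_zero]

lemma Ge.mono {S : Setup n r m B} {N N' : ℤ} {a : B} (ha : S.Ge N a) (h : N' ≤ N) :
    S.Ge N' a := fun g hg => ha g (by linarith)

lemma Ge.le_v {S : Setup n r m B} {N : ℤ} {a : B} (h : S.Ge N a) (ha : a ≠ 0) : N ≤ S.v a := by
  by_contra hlt
  have := h _ (not_le.1 hlt)
  rw [HahnSeries.coeff_order_eq_zero] at this
  exact S.φ_ne ha this

lemma Ge_of_le_v {S : Setup n r m B} {N : ℤ} {a : B} (h : a ≠ 0 → N ≤ S.v a) : S.Ge N a := by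
  intro g hg
  by_cases ha : a = 0
  · rw [ha, map_zero]; rfl
  · exact HahnSeries.coeff_eq_zero_of_lt_order (lt_of_fst (lt_of_lt_of_le hg (h ha)))

lemma gr_step (S : Setup n r m B) (hr : 2 ≤ r) (hm : ∀ i, 2 ≤ m i) (D : Derivation ℂ B B)
    (hD : D ≠ 0) (hN : ∀ c, ∃ k : ℕ, (⇑D)^[k] c = 0) :
    ∀ b, b ≠ 0 → D b = 0 → S.v b = 0 := by
  obtain ⟨δ, E, hE0, hE⟩ := S.exists_gr D hD
  have hx : ∀ i, E (ev i) = 0 := by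
    refine comb hr hm E δ hE0 ?_
    intro a j c hj
    obtain ⟨k, hk, hl⟩ := S.chain D hN hE (a, ⟨j, hj⟩, c)
    refine ⟨k, hk, fun l hle => ?_⟩
    obtain ⟨t', ht'⟩ := hl l hle
    exact ⟨_, _, _, ht'⟩
  have hf : E (fv n) ≠ 0 := by
    intro h0
    apply hE0
    ext g
    rw [G_eq g, map_add, map_sum]
    simp only [map_zsmul, hx, h0]
    simp
  have hg : E (gv r m) = r * E (fv n) := by
    have := congrArg E (gv_rel r m)
    simp only [map_add, map_sum, map_nsmul, hx] at this
    simpa using this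
  intro b hb hDb
  obtain ⟨t, -, ht⟩ := S.order_eq b hb
  have h1 := (hE b _ (LB_order _)).2
  rw [hDb, map_zero, ht] at h1
  have h2 : (S.φ b).coeff (S.w t) ≠ 0 := by
    rw [← ht, Ne, HahnSeries.coeff_order_eq_zero]; exact S.φ_ne hb
  have h3 : E (S.w t) = 0 := by
    rcases mul_eq_zero.1 h1.symm with h | h
    · exact h
    · exact absurd h h2
  rw [w, map_wt, hg] at h3
  simp only [hx, mul_zero, Finset.sum_const_zero] at h3
  have h4 : (((t.2.1 : ℕ) + r * t.2.2 : ℕ) : ℂ) * E (fv n) = 0 := by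
    push_cast; linear_combination h3
  have h5 : ((t.2.1 : ℕ) + r * t.2.2 : ℕ) = 0 := by
    rcases mul_eq_zero.1 h4 with h | h
    · exact_mod_cast h
    · exact absurd h hf
  rw [v, ht, w, fst_wt]
  have : (((t.2.1 : ℕ) + r * t.2.2 : ℕ) : ℤ) = 0 := by exact_mod_cast h5
  push_cast at this
  linarith

lemma iter_mul (D : Derivation ℂ B B) {a : B} (ha : D a = 0) (b : B) (k : ℕ) :
    (⇑D)^[k] (a * b) = a * (⇑D)^[k] b := by
  induction k with
  | zero => rfl
  | succ k ih =>
    rw [Function.iterate_succ_apply', ih, D.leibniz, ha, smul_zero, add_zero, smul_eq_mul,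
      Function.iterate_succ_apply']

lemma D_pow_ker (D : Derivation ℂ B B) {a : B} (ha : D a = 0) (k : ℕ) : D (a ^ k) = 0 := by
  rw [D.leibniz_pow, ha, smul_zero, smul_zero]

lemma iter_pow (D : Derivation ℂ B B) {p q : B} (hp : D p = q) (hq : D q = 0) (k : ℕ) :
    (⇑D)^[k] (p ^ k) = (k.factorial : B) * q ^ k := by
  induction k with
  | zero => simp
  | succ k ih =>
    rw [Function.iterate_succ_apply, D.leibniz_pow, hp]
    have e : (k + 1) • p ^ (k + 1 - 1) • q = (((k + 1 : ℕ) : B) * q) * p ^ k := by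
      rw [Nat.add_sub_cancel, smul_eq_mul, nsmul_eq_mul]; ring
    have hk : D (((k + 1 : ℕ) : B) * q) = 0 := by
      rw [D.leibniz, hq, D.map_natCast, smul_zero, smul_zero, add_zero]
    rw [e, iter_mul D hk, ih, Nat.factorial_succ]
    push_cast; ring

/-- Every nonzero locally nilpotent derivation kills the `x_i`. -/
lemma kills_x (S : Setup n r m B) (hr : 2 ≤ r) (hm : ∀ i, 2 ≤ m i) (D : Derivation ℂ B B)
    (hN : ∀ c, ∃ k : ℕ, (⇑D)^[k] c = 0) (i : Fin n) : D (S.x i) = 0 := by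
  classical
  by_cases hD : D = 0
  · rw [hD]; rfl
  have hker := S.gr_step hr hm D hD hN
  have hzero : ∀ k : ℕ, (⇑D)^[k] (0 : B) = 0 := by
    intro k
    exact Function.iterate_fixed (map_zero D) k
  -- degrees
  have hdeg : ∀ b : B, b ≠ 0 → ∃ k : ℕ, (⇑D)^[k] b ≠ 0 ∧ (⇑D)^[k + 1] b = 0 := by
    intro b hb
    have h0 : Nat.find (hN b) ≠ 0 := by
      intro h
      have := Nat.find_spec (hN b)
      rw [h] at this
      exact hb this
    obtain ⟨k, hk⟩ := Nat.exists_eq_succ_of_ne_zero h0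
    refine ⟨k, Nat.find_min (hN b) (by omega), ?_⟩
    have := Nat.find_spec (hN b)
    rwa [hk] at this
  -- local slice
  obtain ⟨p, q, hp, hq0, hq⟩ : ∃ p q : B, D p = q ∧ q ≠ 0 ∧ D q = 0 := by
    have : ∃ b, D b ≠ 0 := by
      by_contra hcon
      push Not at hcon
      exact hD (Derivation.ext hcon)
    obtain ⟨b, hb⟩ := this
    obtain ⟨k, hk1, hk2⟩ := hdeg (D b) hb
    refine ⟨(⇑D)^[k] b, (⇑D)^[k] (D b), ?_, hk1, ?_⟩
    · rw [← Function.iterate_succ_apply' (⇑D), ← Function.iterate_succ_apply]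
    · rw [← Function.iterate_succ_apply' (⇑D)]; exact hk2
  have hp0 : p ≠ 0 := by
    rintro rfl
    rw [map_zero] at hp
    exact hq0 hp.symm
  have hfac : ∀ k : ℕ, (k.factorial : B) ≠ 0 := by
    intro k h
    have : S.φ (k.factorial : B) = 0 := by rw [h, map_zero]
    rw [map_natCast] at this
    have h2 : algebraMap ℂ (H n) (k.factorial : ℂ) = 0 := by rw [map_natCast]; exact this
    rw [FaithfulSMul.algebraMap_eq_zero_iff] at h2
    exact k.factorial_ne_zero (by exact_mod_cast h2)
  have hcoef : ∀ k : ℕ, (k.factorial : B) * q ^ k ≠ 0 ∧ D ((k.factorial : B) * q ^ k) = 0 ∧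
      S.v ((k.factorial : B) * q ^ k) = 0 := by
    intro k
    have h1 := S.mul_ne (hfac k) (S.pow_ne hq0 k)
    have h2 : D ((k.factorial : B) * q ^ k) = 0 := by
      rw [D.leibniz, D_pow_ker D hq, D.map_natCast, smul_zero, smul_zero, add_zero]
    exact ⟨h1, h2, hker _ h1 h2⟩
  -- reduction of degree
  have hred : ∀ (k : ℕ) (b : B), (⇑D)^[k + 1] b = 0 →
      (⇑D)^[k] ((k.factorial : B) * q ^ k * b - (⇑D)^[k] b * p ^ k) = 0 := by
    intro k b hb
    have hc : D ((⇑D)^[k] b) = 0 := by rw [← Function.iterate_succ_apply' (⇑D)]; exact hb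
    rw [iterate_map_sub, iter_mul D (hcoef k).2.1, iter_mul D hc, iter_pow D hp hq]
    ring
  have hcp : ∀ (k : ℕ) (b : B), (⇑D)^[k + 1] b = 0 → (⇑D)^[k] b ≠ 0 →
      S.v ((⇑D)^[k] b * p ^ k) = k * S.v p := by
    intro k b hb hne
    have hc : D ((⇑D)^[k] b) = 0 := by rw [← Function.iterate_succ_apply' (⇑D)]; exact hb
    rw [S.v_mul hne (S.pow_ne hp0 k), hker _ hne hc, S.v_pow hp0, zero_add]
  have hvp := S.v_nonpos hp0
  have hP : ∀ (k : ℕ) (b : B), (⇑D)^[k + 1] b = 0 → S.Ge (k * S.v p) b := by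
    intro k
    induction k with
    | zero =>
      intro b hb
      refine Ge_of_le_v fun hb0 => ?_
      rw [hker b hb0 hb]; simp
    | succ k ih =>
      intro b hb
      have h1 := ih _ (hred (k + 1) b hb)
      have h2 : S.Ge ((k + 1 : ℕ) * S.v p) ((⇑D)^[k + 1] b * p ^ (k + 1)) := by
        by_cases hne : (⇑D)^[k + 1] b = 0
        · rw [hne, zero_mul]; intro g _; rw [map_zero]; rfl
        · exact Ge_of_le_v fun _ => (hcp _ b hb hne).ge
      have h3 := (h1.mono (N' := (k + 1 : ℕ) * S.v p) (by push_cast; linarith)).add h2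
      rw [sub_add_cancel] at h3
      refine Ge_of_le_v fun hb0 => ?_
      have h4 := h3.le_v (S.mul_ne (hcoef (k + 1)).1 hb0)
      rwa [S.v_mul (hcoef (k + 1)).1 hb0, (hcoef (k + 1)).2.2, zero_add] at h4
  have hvp' : S.v p < 0 := by
    rcases lt_or_eq_of_le hvp with h | h
    · exact h
    · exfalso
      have hy0 : S.y ≠ 0 := by
        intro h0
        have := S.hy.2
        rw [h0, map_zero] at this
        exact zero_ne_one this
      obtain ⟨k, -, hk⟩ := hdeg S.y hy0
      have := (hP k _ hk).le_v hy0
      have h2 : S.v S.y = -1 := by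
        rw [v, S.hy.1.order (by rw [S.hy.2]; exact one_ne_zero), fst_fv]
      rw [h2, h, mul_zero] at this
      omega
  have hx0 : S.x i ≠ 0 := by
    intro h0
    have := (S.hx i).2
    rw [h0, map_zero] at this
    exact zero_ne_one this
  have hvx : S.v (S.x i) = 0 := by
    rw [v, (S.hx i).1.order (by rw [(S.hx i).2]; exact one_ne_zero), fst_ev]
  obtain ⟨k, hk1, hk2⟩ := hdeg (S.x i) hx0
  rcases k with _ | k
  · exact hk2
  · exfalso
    have h1 := hP k _ (hred (k + 1) _ hk2)
    have h2 : S.Ge (k * S.v p) (((k + 1).factorial : B) * q ^ (k + 1) * S.x i) := by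
      refine Ge_of_le_v fun _ => ?_
      rw [S.v_mul (hcoef (k + 1)).1 hx0, (hcoef (k + 1)).2.2, hvx]
      have : (k : ℤ) * S.v p ≤ 0 := mul_nonpos_of_nonneg_of_nonpos (by positivity) hvp
      linarith
    have h3 := h2.sub h1
    rw [sub_sub_cancel] at h3
    have h4 := h3.le_v (S.mul_ne hk1 (S.pow_ne hp0 _))
    rw [hcp _ _ hk2 hk1] at h4
    push_cast at h4
    linarith

/-- Elements of `y`-degree zero are polynomials in the `x_i`. -/
lemma mem_of_v (S : Setup n r m B) (b : B) (hv : S.v b = 0) :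
    b ∈ Submodule.span ℂ (Set.range fun a : Fin n → ℕ => ∏ i, S.x i ^ a i) := by
  refine Submodule.span_mono ?_ (S.mem_span_of_LB b _ (LB_order _))
  rintro _ ⟨t, ht, rfl⟩
  have h1 := fst_mono ht
  have h2 : fstHom n (S.φ b).order = 0 := hv
  rw [h2, w, fst_wt] at h1
  have h3 : ((t.2.1 : ℕ) + r * t.2.2 : ℕ) = 0 := by
    have : (((t.2.1 : ℕ) + r * t.2.2 : ℕ) : ℤ) ≤ 0 := by push_cast; linarith
    omega
  have hr : 0 < r := t.2.1.pos
  have h4 : (t.2.1 : ℕ) = 0 := by omega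
  have h5 : t.2.2 = 0 := by
    have : r * t.2.2 = 0 := by omega
    rcases Nat.mul_eq_zero.1 this with h | h <;> omega
  refine ⟨t.1, ?_⟩
  rw [M, h4, h5]; simp

end Setup
end MLInv

namespace MLInv

section Nil

variable {R : Type} [CommRing R] [Algebra ℂ R]

lemma iter_zero (D : Derivation ℂ R R) (k : ℕ) : (⇑D)^[k] (0 : R) = 0 :=
  Function.iterate_fixed (map_zero D) k

lemma nil_mul_aux (D : Derivation ℂ R R) (s : ℕ) : ∀ (k l : ℕ) (a b : R), k + l = s →
    (⇑D)^[k] a = 0 → (⇑D)^[l] b = 0 → (⇑D)^[s] (a * b) = 0 := by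
  induction s with
  | zero =>
    intro k l a b h ha hb
    have : k = 0 := by omega
    subst this
    have ha' : a = 0 := ha
    rw [ha', zero_mul]; rfl
  | succ s ih =>
    intro k l a b h ha hb
    rcases k with _ | k
    · have ha' : a = 0 := ha
      rw [ha', zero_mul, iter_zero]
    rcases l with _ | l
    · have hb' : b = 0 := hb
      rw [hb', mul_zero, iter_zero]
    rw [Function.iterate_succ_apply, D.leibniz, iterate_map_add, smul_eq_mul, smul_eq_mul,
      ih (k + 1) l a (D b) (by omega) ha hb, ih (l + 1) k b (D a) (by omega) hb ha, add_zero]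

/-- Elements on which `D` is nilpotent. -/
def Nil (D : Derivation ℂ R R) (a : R) : Prop := ∃ k : ℕ, (⇑D)^[k] a = 0

lemma Nil.mul {D : Derivation ℂ R R} {a b : R} (ha : Nil D a) (hb : Nil D b) : Nil D (a * b) := by
  obtain ⟨k, hk⟩ := ha
  obtain ⟨l, hl⟩ := hb
  exact ⟨k + l, nil_mul_aux D _ k l a b rfl hk hl⟩

lemma Nil.add {D : Derivation ℂ R R} {a b : R} (ha : Nil D a) (hb : Nil D b) : Nil D (a + b) := by
  obtain ⟨k, hk⟩ := ha
  obtain ⟨l, hl⟩ := hb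
  refine ⟨k + l, ?_⟩
  rw [iterate_map_add]
  nth_rewrite 1 [add_comm k l]
  rw [Function.iterate_add_apply, hk, iter_zero, Function.iterate_add_apply, hl, iter_zero,
    add_zero]

lemma Nil.of_ker {D : Derivation ℂ R R} {a : R} (ha : D a = 0) : Nil D a := ⟨1, ha⟩

lemma Nil.of_D {D : Derivation ℂ R R} {a : R} (ha : Nil D (D a)) : Nil D a := by
  obtain ⟨k, hk⟩ := ha
  exact ⟨k + 1, by rw [Function.iterate_succ_apply]; exact hk⟩

lemma Nil.pow {D : Derivation ℂ R R} {a : R} (ha : Nil D a) (k : ℕ) : Nil D (a ^ k) := by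
  induction k with
  | zero => rw [pow_zero]; exact Nil.of_ker D.map_one_eq_zero
  | succ k ih => rw [pow_succ]; exact ih.mul ha

end Nil

section Span

variable {n r : ℕ} {m : Fin n → ℕ} {B : Type} [CommRing B] [Algebra ℂ B]

lemma prod_add (x : Fin n → B) (a a' : Fin n → ℕ) :
    (∏ i, x i ^ a i) * (∏ i, x i ^ a' i) = ∏ i, x i ^ (a + a') i := by
  rw [← Finset.prod_mul_distrib]
  exact Finset.prod_congr rfl fun i _ => (pow_add _ _ _).symm

lemma prod_single (x : Fin n → B) (k : Fin n) :
    ∏ i, x i ^ (Pi.single k 1 : Fin n → ℕ) i = x k := by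
  rw [Finset.prod_eq_single k]
  · simp
  · intro i _ hne
    simp [Pi.single_apply, hne]
  · intro h; exact absurd (Finset.mem_univ _) h

/-- The span of the monomials in normal form. -/
def NF (r : ℕ) (x : Fin n → B) (y z : B) : Submodule ℂ B :=
  Submodule.span ℂ (Set.range fun t : (Fin n → ℕ) × Fin r × ℕ =>
    (∏ i, x i ^ t.1 i) * y ^ (t.2.1 : ℕ) * z ^ t.2.2)

lemma NF_mem (x : Fin n → B) (y z : B) (a : Fin n → ℕ) (j c : ℕ) (hj : j < r) :
    (∏ i, x i ^ a i) * y ^ j * z ^ c ∈ NF r x y z :=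
  Submodule.subset_span ⟨(a, ⟨j, hj⟩, c), rfl⟩

lemma NF_mul (x : Fin n → B) (y z e : B)
    (h : ∀ (a : Fin n → ℕ) (j c : ℕ), j < r →
      (∏ i, x i ^ a i) * y ^ j * z ^ c * e ∈ NF r x y z) (b : B) (hb : b ∈ NF r x y z) :
    b * e ∈ NF r x y z := by
  refine Submodule.span_induction (p := fun b _ => b * e ∈ NF r x y z) ?_ ?_ ?_ ?_ hb
  · rintro _ ⟨t, rfl⟩
    exact h _ _ _ t.2.1.2
  · rw [zero_mul]; exact Submodule.zero_mem _
  · intro a b _ _ ha hb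
    rw [add_mul]; exact Submodule.add_mem _ ha hb
  · intro c a _ ha
    rw [smul_mul_assoc]; exact Submodule.smul_mem _ _ ha

lemma NF_mul_x (x : Fin n → B) (y z : B) (k : Fin n) (b : B) (hb : b ∈ NF r x y z) :
    b * x k ∈ NF r x y z := by
  refine NF_mul x y z (x k) ?_ b hb
  intro a j c hj
  have : (∏ i, x i ^ a i) * y ^ j * z ^ c * x k =
      (∏ i, x i ^ (a + (Pi.single k 1 : Fin n → ℕ)) i) * y ^ j * z ^ c := by
    rw [← prod_add, prod_single]; ring
  rw [this]
  exact NF_mem x y z _ _ _ hj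

lemma NF_mul_z (x : Fin n → B) (y z : B) (b : B) (hb : b ∈ NF r x y z) :
    b * z ∈ NF r x y z := by
  refine NF_mul x y z z ?_ b hb
  intro a j c hj
  rw [mul_assoc, ← pow_succ]
  exact NF_mem x y z _ _ _ hj

lemma NF_mul_y (hr : 0 < r) (x : Fin n → B) (y z u : B)
    (rel : (∏ i, x i ^ m i) * z = y ^ r + u)
    (hu : u ∈ Submodule.span ℂ
      {b | ∃ (a : Fin n → ℕ) (j : ℕ), j < r ∧ b = (∏ i, x i ^ a i) * y ^ j})
    (b : B) (hb : b ∈ NF r x y z) :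
    b * y ∈ NF r x y z := by
  refine NF_mul x y z y ?_ b hb
  intro a j c hj
  by_cases hj' : j + 1 < r
  · have : (∏ i, x i ^ a i) * y ^ j * z ^ c * y = (∏ i, x i ^ a i) * y ^ (j + 1) * z ^ c := by ring
    rw [this]
    exact NF_mem x y z _ _ _ hj'
  · have hjr : r = j + 1 := by omega
    have : (∏ i, x i ^ a i) * y ^ j * z ^ c * y =
        (∏ i, x i ^ (a + m) i) * y ^ 0 * z ^ (c + 1) - u * ((∏ i, x i ^ a i) * z ^ c) := by
      rw [← prod_add]
      have e : y * y ^ j = (∏ i, x i ^ m i) * z - u := by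
        rw [rel, hjr]; ring
      linear_combination ((∏ i, x i ^ a i) * z ^ c) * e
    rw [this]
    refine Submodule.sub_mem _ (NF_mem x y z _ _ _ hr) ?_
    refine Submodule.span_induction
      (p := fun u _ => u * ((∏ i, x i ^ a i) * z ^ c) ∈ NF r x y z) ?_ ?_ ?_ ?_ hu
    · rintro _ ⟨a', j', hj2, rfl⟩
      have : (∏ i, x i ^ a' i) * y ^ j' * ((∏ i, x i ^ a i) * z ^ c) =
          (∏ i, x i ^ (a' + a) i) * y ^ j' * z ^ c := by
        rw [← prod_add]; ring
      rw [this]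
      exact NF_mem x y z _ _ _ hj2
    · rw [zero_mul]; exact Submodule.zero_mem _
    · intro a b _ _ ha hb
      rw [add_mul]; exact Submodule.add_mem _ ha hb
    · intro c a _ ha
      rw [smul_mul_assoc]; exact Submodule.smul_mem _ _ ha

lemma aeval_mem_span (x : Fin n → B) (a : MvPolynomial (Fin n) ℂ) :
    aeval x a ∈ Submodule.span ℂ (Set.range fun a : Fin n → ℕ => ∏ i, x i ^ a i) := by
  rw [aeval_def, eval₂_eq']
  refine Submodule.sum_mem _ fun d _ => ?_
  rw [← Algebra.smul_def]
  exact Submodule.smul_mem _ _ (Submodule.subset_span ⟨fun i => d i, rfl⟩)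

end Span

section Hahn

variable {n : ℕ}

/-- The map `ℂ[x] → H n`. -/
noncomputable def phiX (n : ℕ) : MvPolynomial (Fin n) ℂ →ₐ[ℂ] H n :=
  aeval fun i => HahnSeries.single (ev i) 1

lemma single_lead (g : G n) : LB (HahnSeries.single g (1 : ℂ)) g ∧
    (HahnSeries.single g (1 : ℂ)).coeff g = 1 := by
  refine ⟨fun g' hg' => ?_, by simp⟩
  exact HahnSeries.coeff_single_of_ne hg'.ne

lemma mul_single_ge (p : H n) (N : ℤ) (hp : ∀ g, fstHom n g < N → p.coeff g = 0) (e : G n) :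
    ∀ g, fstHom n g < N + fstHom n e → (p * HahnSeries.single e (1 : ℂ)).coeff g = 0 := by
  intro g hg
  have : g = (g - e) + e := by abel
  rw [this, HahnSeries.coeff_mul_single_add, hp, zero_mul]
  rw [map_sub]; linarith

lemma phiX_ge (a : MvPolynomial (Fin n) ℂ) : ∀ g, fstHom n g < 0 → (phiX n a).coeff g = 0 := by
  induction a using MvPolynomial.induction_on with
  | C c =>
    intro g hg
    rw [phiX, aeval_C, HahnSeries.algebraMap_apply, HahnSeries.C_apply]
    apply HahnSeries.coeff_single_of_ne
    rintro rfl
    simp at hg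
  | add p q hp hq =>
    intro g hg
    rw [map_add, HahnSeries.coeff_add, hp g hg, hq g hg, add_zero]
  | mul_X p i hp =>
    intro g hg
    rw [map_mul]
    have : phiX n (X i) = HahnSeries.single (ev i) 1 := by rw [phiX, aeval_X]
    rw [this]
    refine mul_single_ge _ 0 hp _ g ?_
    simpa using hg

/-- The image of `Q`. -/
noncomputable def PQ (Q : Polynomial (MvPolynomial (Fin n) ℂ)) : H n :=
  Polynomial.eval₂ (phiX n).toRingHom (HahnSeries.single (fv n) 1) Q

lemma PQ_lead (Q : Polynomial (MvPolynomial (Fin n) ℂ)) (hQ : Q.Monic) :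
    LB (PQ Q) (Q.natDegree • fv n) ∧ (PQ Q).coeff (Q.natDegree • fv n) = 1 := by
  have hlow : ∀ j < Q.natDegree, ∀ g ≤ Q.natDegree • fv n,
      ((phiX n) (Q.coeff j) * HahnSeries.single (fv n) (1 : ℂ) ^ j).coeff g = 0 := by
    intro j hj g hg
    rw [HahnSeries.single_pow, one_pow]
    refine mul_single_ge _ 0 (phiX_ge _) _ g ?_
    have h1 := fst_mono hg
    rw [map_nsmul, fst_fv, nsmul_eq_mul] at h1
    rw [map_nsmul, fst_fv, nsmul_eq_mul]
    have : (j : ℤ) < Q.natDegree := by exact_mod_cast hj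
    linarith
  have hP : PQ Q = ∑ j ∈ Finset.range Q.natDegree,
      (phiX n) (Q.coeff j) * HahnSeries.single (fv n) (1 : ℂ) ^ j +
      HahnSeries.single (Q.natDegree • fv n) 1 := by
    rw [PQ, Polynomial.eval₂_eq_sum_range, Finset.sum_range_succ]
    congr 1
    have : Q.coeff Q.natDegree = 1 := hQ
    rw [this, map_one, one_mul, HahnSeries.single_pow, one_pow]
  obtain ⟨h1, h2⟩ := single_lead (Q.natDegree • fv n)
  rw [hP]
  refine ⟨fun g hg => ?_, ?_⟩
  · rw [HahnSeries.coeff_add, h1 g hg, add_zero, HahnSeries.coeff_sum]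
    exact Finset.sum_eq_zero fun j hj => hlow j (Finset.mem_range.1 hj) g hg.le
  · rw [HahnSeries.coeff_add, h2, HahnSeries.coeff_sum,
      Finset.sum_eq_zero fun j hj => hlow j (Finset.mem_range.1 hj) _ le_rfl, zero_add]

lemma prod_single_H (m : Fin n → ℕ) :
    ∏ i, (HahnSeries.single (ev i) (1 : ℂ) : H n) ^ m i =
      HahnSeries.single (∑ i, m i • ev i) 1 := by
  have : ∀ s : Finset (Fin n), ∏ i ∈ s, (HahnSeries.single (ev i) (1 : ℂ) : H n) ^ m i =
      HahnSeries.single (∑ i ∈ s, m i • ev i) 1 := by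
    classical
    intro s
    induction s using Finset.induction_on with
    | empty => rw [Finset.prod_empty, Finset.sum_empty]; rfl
    | insert i s hi ih =>
      rw [Finset.prod_insert hi, Finset.sum_insert hi, ih, HahnSeries.single_pow, one_pow,
        HahnSeries.single_mul_single, one_mul]
  exact this _

/-- The image of `z`. -/
noncomputable def ZH (m : Fin n → ℕ) (Q : Polynomial (MvPolynomial (Fin n) ℂ)) : H n :=
  HahnSeries.single (-∑ i, m i • ev i) 1 * PQ Q

lemma ZH_rel (m : Fin n → ℕ) (Q : Polynomial (MvPolynomial (Fin n) ℂ)) :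
    (∏ i, (HahnSeries.single (ev i) (1 : ℂ) : H n) ^ m i) * ZH m Q = PQ Q := by
  rw [prod_single_H, ZH, ← mul_assoc, HahnSeries.single_mul_single, add_neg_cancel, one_mul]
  exact one_mul _

lemma ZH_lead (m : Fin n → ℕ) (Q : Polynomial (MvPolynomial (Fin n) ℂ)) (hQ : Q.Monic) :
    LB (ZH m Q) (gv Q.natDegree m) ∧ (ZH m Q).coeff (gv Q.natDegree m) = 1 := by
  have e : gv Q.natDegree m = (-∑ i, m i • ev i) + Q.natDegree • fv n := by
    rw [← gv_rel Q.natDegree m]; abel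
  obtain ⟨h1, h2⟩ := PQ_lead Q hQ
  obtain ⟨h3, h4⟩ := single_lead (-∑ i, m i • ev i)
  rw [e]
  exact ⟨h3.mul h1, by rw [ZH, h3.coeff_mul h1, h2, h4, one_mul]⟩

end Hahn

section Concrete

variable {n : ℕ}

/-- Big polynomial ring. -/
abbrev R (n : ℕ) := MvPolynomial (Fin n ⊕ Fin 2) ℂ

/-- inclusion -/
noncomputable def io (n : ℕ) : MvPolynomial (Fin n) ℂ →ₐ[ℂ] R n := rename Sum.inl

/-- The defining polynomial. -/
noncomputable def FF (m : Fin n → ℕ) (Q : Polynomial (MvPolynomial (Fin n) ℂ)) : R n :=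
  (∏ i, X (Sum.inl i) ^ m i) * X (Sum.inr 1) -
    Polynomial.eval₂ (io n).toRingHom (X (Sum.inr 0)) Q

/-- The map to Hahn series. -/
noncomputable def phi0 (m : Fin n → ℕ) (Q : Polynomial (MvPolynomial (Fin n) ℂ)) :
    R n →ₐ[ℂ] H n :=
  aeval (Sum.elim (fun i => HahnSeries.single (ev i) 1) ![HahnSeries.single (fv n) 1, ZH m Q])

lemma phi0_x (m : Fin n → ℕ) (Q : Polynomial (MvPolynomial (Fin n) ℂ)) (i : Fin n) :
    phi0 m Q (X (Sum.inl i)) = HahnSeries.single (ev i) 1 := by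
  rw [phi0, aeval_X]; rfl

lemma phi0_y (m : Fin n → ℕ) (Q : Polynomial (MvPolynomial (Fin n) ℂ)) :
    phi0 m Q (X (Sum.inr 0)) = HahnSeries.single (fv n) 1 := by
  rw [phi0, aeval_X]; rfl

lemma phi0_z (m : Fin n → ℕ) (Q : Polynomial (MvPolynomial (Fin n) ℂ)) :
    phi0 m Q (X (Sum.inr 1)) = ZH m Q := by
  rw [phi0, aeval_X]; rfl

lemma phi0_io (m : Fin n → ℕ) (Q : Polynomial (MvPolynomial (Fin n) ℂ)) :
    (phi0 m Q).toRingHom.comp (io n).toRingHom = (phiX n).toRingHom := by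
  have : (phi0 m Q).comp (io n) = phiX n := by
    apply MvPolynomial.algHom_ext
    intro i
    rw [AlgHom.comp_apply, io, rename_X, phi0_x, phiX, aeval_X]
  rw [← this]; rfl

lemma phi0_FF (m : Fin n → ℕ) (Q : Polynomial (MvPolynomial (Fin n) ℂ)) :
    phi0 m Q (FF m Q) = 0 := by
  rw [FF, map_sub, map_mul, map_prod, phi0_z]
  simp only [map_pow, phi0_x]
  rw [ZH_rel]
  have : phi0 m Q (Polynomial.eval₂ (io n).toRingHom (X (Sum.inr 0)) Q) = PQ Q := by
    have := Polynomial.hom_eval₂ Q (io n).toRingHom (phi0 m Q).toRingHom (X (Sum.inr 0))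
    rw [phi0_io] at this
    rw [PQ, ← phi0_y m Q]
    exact this
  rw [this, sub_self]

/-- The coordinate ring. -/
abbrev BB (m : Fin n → ℕ) (Q : Polynomial (MvPolynomial (Fin n) ℂ)) := R n ⧸ Ideal.span {FF m Q}

/-- quotient map -/
noncomputable def pi0 (m : Fin n → ℕ) (Q : Polynomial (MvPolynomial (Fin n) ℂ)) :
    R n →ₐ[ℂ] BB m Q := Ideal.Quotient.mkₐ ℂ (Ideal.span {FF m Q})

lemma pi0_FF (m : Fin n → ℕ) (Q : Polynomial (MvPolynomial (Fin n) ℂ)) : pi0 m Q (FF m Q) = 0 :=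
  Ideal.Quotient.eq_zero_iff_mem.2 (Ideal.subset_span rfl)

lemma pi0_surj (m : Fin n → ℕ) (Q : Polynomial (MvPolynomial (Fin n) ℂ)) :
    Function.Surjective (pi0 m Q) := Ideal.Quotient.mk_surjective

lemma pi0_io (m : Fin n → ℕ) (Q : Polynomial (MvPolynomial (Fin n) ℂ))
    (a : MvPolynomial (Fin n) ℂ) :
    pi0 m Q (io n a) = aeval (fun i => pi0 m Q (X (Sum.inl i))) a := by
  have : (pi0 m Q).comp (io n) = aeval (fun i => pi0 m Q (X (Sum.inl i))) := by
    apply MvPolynomial.algHom_ext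
    intro i
    rw [AlgHom.comp_apply, io, rename_X, aeval_X]
  rw [← this]; rfl

/-- Lower-order part of `Q` in the coordinate ring. -/
noncomputable def uu (m : Fin n → ℕ) (Q : Polynomial (MvPolynomial (Fin n) ℂ)) : BB m Q :=
  ∑ j ∈ Finset.range Q.natDegree, pi0 m Q (io n (Q.coeff j)) * pi0 m Q (X (Sum.inr 0)) ^ j

lemma uu_rel (m : Fin n → ℕ) (Q : Polynomial (MvPolynomial (Fin n) ℂ)) (hQ : Q.Monic) :
    (∏ i, pi0 m Q (X (Sum.inl i)) ^ m i) * pi0 m Q (X (Sum.inr 1)) =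
      pi0 m Q (X (Sum.inr 0)) ^ Q.natDegree + uu m Q := by
  have h : pi0 m Q ((∏ i, X (Sum.inl i) ^ m i) * X (Sum.inr 1) -
      Polynomial.eval₂ (io n).toRingHom (X (Sum.inr 0)) Q) = 0 := pi0_FF m Q
  rw [map_sub, map_mul, map_prod, sub_eq_zero] at h
  simp only [map_pow] at h
  rw [h, Polynomial.eval₂_eq_sum_range, map_sum, Finset.sum_range_succ, add_comm]
  have e : Q.coeff Q.natDegree = 1 := hQ
  congr 1
  rw [e, map_one, one_mul, map_pow]

lemma uu_mem (m : Fin n → ℕ) (Q : Polynomial (MvPolynomial (Fin n) ℂ)) :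
    uu m Q ∈ Submodule.span ℂ {b : BB m Q | ∃ (a : Fin n → ℕ) (j : ℕ), j < Q.natDegree ∧
      b = (∏ i, pi0 m Q (X (Sum.inl i)) ^ a i) * pi0 m Q (X (Sum.inr 0)) ^ j} := by
  refine Submodule.sum_mem _ fun j hj => ?_
  rw [pi0_io]
  refine Submodule.span_induction (p := fun b _ => b * pi0 m Q (X (Sum.inr 0)) ^ j ∈
    Submodule.span ℂ {b : BB m Q | ∃ (a : Fin n → ℕ) (j : ℕ), j < Q.natDegree ∧
      b = (∏ i, pi0 m Q (X (Sum.inl i)) ^ a i) * pi0 m Q (X (Sum.inr 0)) ^ j}) ?_ ?_ ?_ ?_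
      (aeval_mem_span (fun i => pi0 m Q (X (Sum.inl i))) (Q.coeff j))
  · rintro _ ⟨a, rfl⟩
    exact Submodule.subset_span ⟨a, j, Finset.mem_range.1 hj, rfl⟩
  · rw [zero_mul]; exact Submodule.zero_mem _
  · intro a b _ _ ha hb
    rw [add_mul]; exact Submodule.add_mem _ ha hb
  · intro c a _ ha
    rw [smul_mul_assoc]; exact Submodule.smul_mem _ _ ha

lemma all_NF (m : Fin n → ℕ) (Q : Polynomial (MvPolynomial (Fin n) ℂ)) (hQ : Q.Monic)
    (hr : 2 ≤ Q.natDegree) (b : BB m Q) : b ∈ NF Q.natDegree (fun i => pi0 m Q (X (Sum.inl i)))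
      (pi0 m Q (X (Sum.inr 0))) (pi0 m Q (X (Sum.inr 1))) := by
  obtain ⟨p, rfl⟩ := pi0_surj m Q b
  induction p using MvPolynomial.induction_on with
  | C c =>
    have h1 := NF_mem (r := Q.natDegree) (fun i => pi0 m Q (X (Sum.inl i)))
      (pi0 m Q (X (Sum.inr 0))) (pi0 m Q (X (Sum.inr 1))) 0 0 0 (by omega)
    have h2 : pi0 m Q (C c) = c • (1 : BB m Q) := by
      rw [← MvPolynomial.algebraMap_eq, AlgHom.commutes, Algebra.algebraMap_eq_smul_one]
    rw [h2]
    refine Submodule.smul_mem _ _ ?_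
    simpa using h1
  | add p q hp hq => rw [map_add]; exact Submodule.add_mem _ hp hq
  | mul_X p i hp =>
    rw [map_mul]
    rcases i with i | i
    · exact NF_mul_x (fun i => pi0 m Q (X (Sum.inl i))) _ _ i _ hp
    · fin_cases i
      · exact NF_mul_y (by omega) _ _ _ _ (uu_rel m Q hQ) (uu_mem m Q) _ hp
      · exact NF_mul_z _ _ _ _ hp

/-- The embedding into Hahn series. -/
noncomputable def phiB (m : Fin n → ℕ) (Q : Polynomial (MvPolynomial (Fin n) ℂ)) :
    BB m Q →ₐ[ℂ] H n :=
  Ideal.Quotient.liftₐ (Ideal.span {FF m Q}) (phi0 m Q) (by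
    intro a ha
    obtain ⟨c, rfl⟩ := Ideal.mem_span_singleton'.1 ha
    rw [map_mul, phi0_FF, mul_zero])

lemma phiB_pi0 (m : Fin n → ℕ) (Q : Polynomial (MvPolynomial (Fin n) ℂ)) (p : R n) :
    phiB m Q (pi0 m Q p) = phi0 m Q p := rfl

/-- The concrete setup. -/
noncomputable def mkSetup (m : Fin n → ℕ) (Q : Polynomial (MvPolynomial (Fin n) ℂ)) (hQ : Q.Monic)
    (hr : 2 ≤ Q.natDegree) : Setup n Q.natDegree m (BB m Q) where
  x i := pi0 m Q (X (Sum.inl i))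
  y := pi0 m Q (X (Sum.inr 0))
  z := pi0 m Q (X (Sum.inr 1))
  u := uu m Q
  φ := phiB m Q
  hx i := by
    rw [phiB_pi0, phi0_x]; exact single_lead _
  hy := by
    rw [phiB_pi0, phi0_y]; exact single_lead _
  hz := by
    rw [phiB_pi0, phi0_z]; exact ZH_lead m Q hQ
  rel := uu_rel m Q hQ
  hu := uu_mem m Q
  hspan b := all_NF m Q hQ hr b

/-- The standard derivation upstairs. -/
noncomputable def D1 (m : Fin n → ℕ) (Q : Polynomial (MvPolynomial (Fin n) ℂ)) :
    Derivation ℂ (R n) (R n) :=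
  mkDerivation ℂ (Sum.elim (fun _ => 0) ![∏ i, X (Sum.inl i) ^ m i,
    Polynomial.eval₂ (io n).toRingHom (X (Sum.inr 0)) Q.derivative])

lemma D1_x (m : Fin n → ℕ) (Q : Polynomial (MvPolynomial (Fin n) ℂ)) (i : Fin n) :
    D1 m Q (X (Sum.inl i)) = 0 := by
  rw [D1, mkDerivation_X]; rfl

lemma D1_y (m : Fin n → ℕ) (Q : Polynomial (MvPolynomial (Fin n) ℂ)) :
    D1 m Q (X (Sum.inr 0)) = ∏ i, X (Sum.inl i) ^ m i := by
  rw [D1, mkDerivation_X]; rfl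

lemma D1_z (m : Fin n → ℕ) (Q : Polynomial (MvPolynomial (Fin n) ℂ)) :
    D1 m Q (X (Sum.inr 1)) =
      Polynomial.eval₂ (io n).toRingHom (X (Sum.inr 0)) Q.derivative := by
  rw [D1, mkDerivation_X]; rfl

lemma D_prod (B : Type) [CommRing B] [Algebra ℂ B] (D : Derivation ℂ B B) (x : Fin n → B)
    (hx : ∀ i, D (x i) = 0) (a : Fin n → ℕ) : D (∏ i, x i ^ a i) = 0 := by
  refine Finset.prod_induction _ (fun b => D b = 0) ?_ D.map_one_eq_zero ?_
  · intro b b' h h'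
    rw [D.leibniz, h, h', smul_zero, smul_zero, add_zero]
  · intro i _
    rw [D.leibniz_pow, hx, smul_zero, smul_zero]

lemma D_aeval (B : Type) [CommRing B] [Algebra ℂ B] (D : Derivation ℂ B B) (x : Fin n → B)
    (hx : ∀ i, D (x i) = 0) (p : MvPolynomial (Fin n) ℂ) : D (aeval x p) = 0 := by
  refine Submodule.span_induction (p := fun b _ => D b = 0) ?_ ?_ ?_ ?_ (aeval_mem_span x p)
  · rintro _ ⟨a, rfl⟩
    exact D_prod B D x hx a
  · exact map_zero D
  · intro a b _ _ ha hb
    rw [map_add, ha, hb, add_zero]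
  · intro c a _ ha
    rw [D.map_smul, ha, smul_zero]

lemma D1_io (m : Fin n → ℕ) (Q : Polynomial (MvPolynomial (Fin n) ℂ))
    (a : MvPolynomial (Fin n) ℂ) : D1 m Q (io n a) = 0 := by
  have : io n = aeval (fun i => X (Sum.inl i)) := by
    apply MvPolynomial.algHom_ext
    intro i
    rw [io, rename_X, aeval_X]
  rw [this]
  exact D_aeval (R n) (D1 m Q) (fun i => X (Sum.inl i)) (D1_x m Q) a

lemma D1_eval (m : Fin n → ℕ) (Q P : Polynomial (MvPolynomial (Fin n) ℂ)) :
    D1 m Q (Polynomial.eval₂ (io n).toRingHom (X (Sum.inr 0)) P) =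
      Polynomial.eval₂ (io n).toRingHom (X (Sum.inr 0)) P.derivative *
        ∏ i, X (Sum.inl i) ^ m i := by
  induction P using Polynomial.induction_on' with
  | add p q hp hq =>
    rw [Polynomial.eval₂_add, map_add, hp, hq, Polynomial.derivative_add, Polynomial.eval₂_add,
      add_mul]
  | monomial k a =>
    have e : (io n).toRingHom a = io n a := rfl
    rw [Polynomial.eval₂_monomial, Derivation.leibniz, e, D1_io, smul_zero, add_zero,
      Derivation.leibniz_pow, D1_y, Polynomial.derivative_monomial, Polynomial.eval₂_monomial,
      map_mul, map_natCast, e]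
    simp only [smul_eq_mul, nsmul_eq_mul]
    ring

lemma D1_FF (m : Fin n → ℕ) (Q : Polynomial (MvPolynomial (Fin n) ℂ)) : D1 m Q (FF m Q) = 0 := by
  rw [FF, map_sub, Derivation.leibniz, D_prod _ _ _ (D1_x m Q), D1_z, D1_eval, smul_zero,
    add_zero, smul_eq_mul]
  ring

lemma D1_nil (m : Fin n → ℕ) (Q : Polynomial (MvPolynomial (Fin n) ℂ)) (p : R n) :
    Nil (D1 m Q) p := by
  have hy : Nil (D1 m Q) (X (Sum.inr 0)) := by
    apply Nil.of_D
    rw [D1_y]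
    exact Nil.of_ker (D_prod _ _ _ (D1_x m Q) m)
  have hev : ∀ P : Polynomial (MvPolynomial (Fin n) ℂ),
      Nil (D1 m Q) (Polynomial.eval₂ (io n).toRingHom (X (Sum.inr 0)) P) := by
    intro P
    induction P using Polynomial.induction_on' with
    | add p q hp hq => rw [Polynomial.eval₂_add]; exact hp.add hq
    | monomial k a =>
      rw [Polynomial.eval₂_monomial]
      exact (Nil.of_ker (D1_io m Q a)).mul (hy.pow k)
  induction p using MvPolynomial.induction_on with
  | C c =>
    apply Nil.of_ker
    rw [← MvPolynomial.algebraMap_eq, Derivation.map_algebraMap]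
  | add p q hp hq => exact hp.add hq
  | mul_X p i hp =>
    refine hp.mul ?_
    rcases i with i | i
    · exact Nil.of_ker (D1_x m Q i)
    · fin_cases i
      · exact hy
      · apply Nil.of_D
        have := hev Q.derivative
        rw [← D1_z m Q] at this
        exact this

lemma exists_std (m : Fin n → ℕ) (Q : Polynomial (MvPolynomial (Fin n) ℂ)) :
    ∃ D : Derivation ℂ (BB m Q) (BB m Q), (∀ c, ∃ k : ℕ, (⇑D)^[k] c = 0) ∧
      D (pi0 m Q (X (Sum.inr 0))) = ∏ i, pi0 m Q (X (Sum.inl i)) ^ m i := by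
  have hd : ∀ p : R n, pi0 m Q p = 0 → pi0 m Q (D1 m Q p) = 0 := by
    intro p hp
    obtain ⟨c, rfl⟩ := Ideal.mem_span_singleton'.1 (Ideal.Quotient.eq_zero_iff_mem.1 hp)
    rw [Derivation.leibniz, D1_FF, smul_zero, zero_add, smul_eq_mul, map_mul, pi0_FF, zero_mul]
  let D : Derivation ℂ (BB m Q) (BB m Q) := Derivation.liftOfSurjective (pi0_surj m Q) hd
  have hD : ∀ p, D (pi0 m Q p) = pi0 m Q (D1 m Q p) :=
    fun p => Derivation.liftOfSurjective_apply (pi0_surj m Q) hd p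
  refine ⟨D, ?_, ?_⟩
  · intro c
    obtain ⟨p, rfl⟩ := pi0_surj m Q c
    obtain ⟨k, hk⟩ := D1_nil m Q p
    refine ⟨k, ?_⟩
    have : ∀ k : ℕ, (⇑D)^[k] (pi0 m Q p) = pi0 m Q ((⇑(D1 m Q))^[k] p) := by
      intro k
      induction k with
      | zero => rfl
      | succ k ih => rw [Function.iterate_succ_apply', ih, hD, Function.iterate_succ_apply']
    rw [this, hk, map_zero]
  · rw [hD, D1_y, map_prod]
    simp only [map_pow]

lemma span_range (m : Fin n → ℕ) (Q : Polynomial (MvPolynomial (Fin n) ℂ)) (b : BB m Q)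
    (hb : b ∈ Submodule.span ℂ
      (Set.range fun a : Fin n → ℕ => ∏ i, pi0 m Q (X (Sum.inl i)) ^ a i)) :
    ∃ a, pi0 m Q (io n a) = b := by
  refine Submodule.span_induction (p := fun b _ => ∃ a, pi0 m Q (io n a) = b) ?_ ?_ ?_ ?_ hb
  · rintro _ ⟨a, rfl⟩
    refine ⟨∏ i, X i ^ a i, ?_⟩
    rw [pi0_io, map_prod]
    simp only [map_pow, aeval_X]
  · exact ⟨0, by rw [map_zero, map_zero]⟩
  · rintro _ _ _ _ ⟨a, rfl⟩ ⟨b, rfl⟩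
    exact ⟨a + b, by rw [map_add, map_add]⟩
  · rintro c _ _ ⟨a, rfl⟩
    exact ⟨c • a, by rw [map_smul, map_smul]⟩

theorem main (m : Fin n → ℕ) (hm : ∀ i, 2 ≤ m i)
    (Q : Polynomial (MvPolynomial (Fin n) ℂ)) (hQ : Q.Monic) (hr : 2 ≤ Q.natDegree) (b : BB m Q) :
    (∀ D : Derivation ℂ (BB m Q) (BB m Q), (∀ c, ∃ k : ℕ, (⇑D)^[k] c = 0) → D b = 0) ↔
      ∃ a, pi0 m Q (io n a) = b := by
  let S := mkSetup m Q hQ hr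
  constructor
  · intro h
    by_cases hb : b = 0
    · exact ⟨0, by rw [hb, map_zero, map_zero]⟩
    obtain ⟨D, hN, hDy⟩ := exists_std m Q
    have hx0 : ∀ i, S.x i ≠ 0 := by
      intro i h0
      have := (S.hx i).2
      rw [h0, map_zero] at this
      exact zero_ne_one this
    have hne : ∏ i, S.x i ^ m i ≠ 0 :=
      Finset.prod_induction _ (fun b => b ≠ 0) (fun _ _ => S.mul_ne) S.one_ne
        fun i _ => S.pow_ne (hx0 i) _
    have hD : D ≠ 0 := by
      rintro rfl
      exact hne hDy.symm
    exact span_range m Q b (S.mem_of_v b (S.gr_step hr hm D hD hN b hb (h D hN)))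
  · rintro ⟨a, rfl⟩ D hN
    rw [pi0_io]
    exact D_aeval _ D _ (fun i => S.kills_x hr hm D hN i) a

end Concrete

end MLInv


open MvPolynomial

set_option synthInstance.maxHeartbeats 1000000
set_option maxHeartbeats 1000000

/-- The Makar-Limanov invariant of
`X = {x^{[m]} z = Q(x,y)}` with `Q` monic in `y` of degree `r ≥ 2` and all
`mᵢ ≥ 2` equals `ℂ[x₁,…,xₙ]`: an element of the coordinate ring is killed by
every locally nilpotent `ℂ`-derivation iff it lies in the image of `ℂ[x₁,…,xₙ]`. -/
theorem stmt14 (n r : ℕ) (hr : 2 ≤ r) (m : Fin n → ℕ) (hm : ∀ i, 2 ≤ m i)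
    (Q : Polynomial (MvPolynomial (Fin n) ℂ)) (hQ : Q.Monic) (hdeg : Q.natDegree = r)
    (ι : MvPolynomial (Fin n) ℂ →+* MvPolynomial (Fin n ⊕ Fin 2) ℂ)
    (hι : ι = (MvPolynomial.rename (Sum.inl : Fin n → Fin n ⊕ Fin 2)).toRingHom)
    (y z xm : MvPolynomial (Fin n ⊕ Fin 2) ℂ)
    (hy : y = MvPolynomial.X (Sum.inr 0)) (hz : z = MvPolynomial.X (Sum.inr 1))
    (hxm : xm = ∏ i, MvPolynomial.X (Sum.inl i) ^ m i)
    (I : Ideal (MvPolynomial (Fin n ⊕ Fin 2) ℂ))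
    (hI : I = Ideal.span {xm * z - Polynomial.eval₂ ι y Q}) :
    ∀ b : MvPolynomial (Fin n ⊕ Fin 2) ℂ ⧸ I,
      (∀ D : Derivation ℂ
          (MvPolynomial (Fin n ⊕ Fin 2) ℂ ⧸ I) (MvPolynomial (Fin n ⊕ Fin 2) ℂ ⧸ I),
        (∀ c, ∃ k : ℕ, (⇑D)^[k] c = 0) → D b = 0) ↔
      b ∈ RingHom.range ((Ideal.Quotient.mk I).comp ι) := by
  subst hι hy hz hxm hI hdeg
  intro b
  have h := MLInv.main m hm Q hQ hr b
  refine Iff.trans h ?_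
  rw [RingHom.mem_range]
  exact Iff.rfl
end
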